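/- Let d ≥ 1, T > 0 and A, B, τ > 0, and let f = e^{−ψ}, F, (ρ, u, R) satisfy all the hypotheses of the relative entropy identity: ψ ∈ C^∞([0,T] × ℝ^{2d}) with all partial derivatives of order ≥ 1 polynomially bounded, sup_{t} ∫∫ (1+|x|+|ξ|)^N f < ∞ for all N, F ∈ C^1 with |F|, |∇_ξ·F| polynomially bounded, f solving A ∂_t f + B ξ·∇_x f + ∇_ξ·(F f) = (1/τ) ∇_ξ·(∇_ξ f + ξ f) pointwise, and ρ ∈ C^1((0,T)×ℝ^d;(0,∞)), u, R ∈ C^1 with |log ρ|, |∇ log ρ|, |u|, |∇u|, |∂_t u|, |R| polynomially bounded in |x| uniformly in t, solving A ∂_t ρ + B ∇·(ρ u) = 0 and A ∂_t(ρ u) + B ∇·(ρ u⊗u) + B ∇ρ = ρ R pointwise. Assume additionally L := sup_{t,x} |∇u(t,x)| < ∞. Then for every t ∈ (0,T): (d/dt) ∫∫ f log(f/M_{ρ,u}) dx dξ + (1/(2τA)) ∫∫ (1/f)|∇_ξ f + (ξ − u_f) f|² dx dξ ≤ (B/A) L ∫ ρ_f |u_f − u|² dx + (B²τ/(2A)) L²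 ∫∫ (1+|ξ|²) f dx dξ − (1/(Aτ)) ∫ ρ_f u_f·(u_f − u) dx − (1/A) ∫∫ (∇_ξ·F) f dx dξ − (1/A) ∫∫ f (u−ξ)·(F − R) dx dξ. -/

import Mathlib

/-
Write `f = exp (-φ)`. Multiplying the kinetic equation by `log (f / M_{ρ,u}) + 1` and using the
macroscopic system turns the entropy production into divergences over phase space, which integrate
to zero, plus a strain term `∇·u - ⟨ξ - u, ∇u (ξ - u)⟩`, the friction `⟨ξ - ∇_ξ φ, ξ - ∇_ξ φ - u⟩`
and the force terms. The friction splits orthogonally into the square of the relative flux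
`ξ - ∇_ξ φ - u_f` and `⟨u_f, u_f - u⟩`. Integrating by parts in `ξ` cancels `∇·u`: the strain term
becomes the pairing of the relative flux with `∇u (ξ - u_f)`, up to a quadratic form in `u_f - u`.
By Young's inequality half of the dissipation absorbs that pairing, at the cost of the kinetic
energy `∫∫ |ξ - u_f|² f ≤ ∫∫ |ξ|² f`.
-/

open MeasureTheory Real
open scoped RealInnerProductSpace

/-- The local Maxwellian `M_{ρ,u}(ξ) = ρ (2π)^{-d/2} exp(-|ξ-u|²/2)`. -/
noncomputable def maxwellian (d : ℕ) (ρ : ℝ) (u ξ : EuclideanSpace ℝ (Fin d)) : ℝ :=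
  ρ * (2 * π) ^ (-(d : ℝ) / 2) * Real.exp (-‖ξ - u‖ ^ 2 / 2)

/-- Divergence of a vector field on Euclidean space. -/
noncomputable def ediv {d : ℕ}
    (G : EuclideanSpace ℝ (Fin d) → EuclideanSpace ℝ (Fin d))
    (ξ : EuclideanSpace ℝ (Fin d)) : ℝ :=
  ∑ i, fderiv ℝ G ξ (EuclideanSpace.single i 1) i

open Asymptotics Filter Set
open scoped Topology

section Divergence

variable {V : Type*} [NormedAddCommGroup V] [NormedSpace ℝ V] [FiniteDimensional ℝ V]

variable (V) in
/-- The trace of an endomorphism, as a continuous linear functional on `V →L[ℝ] V`. -/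
noncomputable def traceCLM : (V →L[ℝ] V) →L[ℝ] ℝ :=
  LinearMap.toContinuousLinearMap (LinearMap.trace ℝ V ∘ₗ ContinuousLinearMap.coeLM ℝ)

/-- The divergence of a vector field on a finite-dimensional space: the trace of its derivative. -/
noncomputable def divergence (G : V → V) (x : V) : ℝ := traceCLM V (fderiv ℝ G x)

lemma traceCLM_apply (S : V →L[ℝ] V) : traceCLM V S = LinearMap.trace ℝ V S := rfl

lemma traceCLM_smulRight (l : V →L[ℝ] ℝ) (v : V) : traceCLM V (l.smulRight v) = l v :=
  LinearMap.trace_smulRight (l : V →ₗ[ℝ] ℝ) v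

lemma traceCLM_eq_sum_coord {ι : Type*} [Fintype ι] (b : Module.Basis ι ℝ V) (S : V →L[ℝ] V) :
    traceCLM V S = ∑ i, b.coord i (S (b i)) := by
  classical
  simp [traceCLM_apply, LinearMap.trace_eq_matrix_trace ℝ b, Matrix.trace, LinearMap.toMatrix_apply]

lemma divergence_smul {a : V → ℝ} {G : V → V} {x : V} (ha : DifferentiableAt ℝ a x)
    (hG : DifferentiableAt ℝ G x) :
    divergence (fun y => a y • G y) x = fderiv ℝ a x (G x) + a x * divergence G x := by
  simp [divergence, fderiv_fun_smul ha hG, traceCLM_smulRight, add_comm]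

lemma continuous_divergence {G : V → V} (hG : ContDiff ℝ 1 G) :
    Continuous (divergence G) :=
  (traceCLM V).continuous.comp (hG.continuous_fderiv one_ne_zero)

lemma divergence_prodMk {W : Type*} [NormedAddCommGroup W] [NormedSpace ℝ W]
    [FiniteDimensional ℝ W] {P : V × W → V} {Q : V × W → W} {p : V × W}
    (hP : DifferentiableAt ℝ P p) (hQ : DifferentiableAt ℝ Q p) :
    divergence (fun q => (P q, Q q)) p
      = divergence (fun x => P (x, p.2)) p.1 + divergence (fun y => Q (p.1, y)) p.2 := by
  have slice_fst : HasFDerivAt (fun x => P (x, p.2)) (fderiv ℝ P p ∘L .inl ℝ V W) p.1 :=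
    hP.hasFDerivAt.comp p.1 (hasFDerivAt_prodMk_left p.1 p.2)
  have slice_snd : HasFDerivAt (fun y => Q (p.1, y)) (fderiv ℝ Q p ∘L .inr ℝ V W) p.2 :=
    hQ.hasFDerivAt.comp p.2 (hasFDerivAt_prodMk_right p.1 p.2)
  have split : (((fderiv ℝ P p).prod (fderiv ℝ Q p) : V × W →L[ℝ] V × W) : V × W →ₗ[ℝ] V × W)
      = LinearMap.inl ℝ V W ∘ₗ (fderiv ℝ P p : V × W →ₗ[ℝ] V)
        + LinearMap.inr ℝ V W ∘ₗ (fderiv ℝ Q p : V × W →ₗ[ℝ] W) := by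
    ext <;> simp
  rw [divergence, (hP.hasFDerivAt.prodMk hQ.hasFDerivAt).fderiv, divergence, slice_fst.fderiv,
    divergence, slice_snd.fderiv, traceCLM_apply, split, map_add,
    LinearMap.trace_comp_comm' _ (LinearMap.inl ℝ V W),
    LinearMap.trace_comp_comm' _ (LinearMap.inr ℝ V W)]
  rfl

variable (V) in
lemma exists_cutoff_seq : ∃ (χ : ℕ → V → ℝ) (C : ℝ), (∀ n, ContDiff ℝ 1 (χ n)) ∧
    (∀ n, HasCompactSupport (χ n)) ∧ (∀ n x, ‖χ n x‖ ≤ 1) ∧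
    (∀ n x, ‖fderiv ℝ (χ n) x‖ ≤ C / (n + 1)) ∧ ∀ x, Tendsto (χ · x) atTop (𝓝 1) := by
  let b : ContDiffBump (0 : V) := ⟨1, 2, one_pos, one_lt_two⟩
  have hb : ContDiff ℝ 1 b := b.contDiff
  obtain ⟨C, hC⟩ := (hb.continuous_fderiv one_ne_zero).bounded_above_of_compact_support
    (b.hasCompactSupport.fderiv ℝ)
  have scale (n : ℕ) : (0 : ℝ) < (n + 1 : ℝ)⁻¹ := by positivity
  refine ⟨fun n x => b ((n + 1 : ℝ)⁻¹ • x), C, fun n => hb.comp (contDiff_const_smul _),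
    fun n => b.hasCompactSupport.comp_smul (scale n).ne', fun n x => ?_, fun n x => ?_, fun x => ?_⟩
  · rw [Real.norm_of_nonneg b.nonneg]
    exact b.le_one
  · rw [fderiv_comp_smul, norm_smul, Real.norm_of_nonneg (scale n).le, div_eq_inv_mul]
    exact mul_le_mul_of_nonneg_left (hC _) (scale n).le
  · have scaled : Tendsto (fun n : ℕ => (n + 1 : ℝ)⁻¹ • x) atTop (𝓝 0) := by
      simpa using (tendsto_one_div_add_atTop_nhds_zero_nat (𝕜 := ℝ)).smul_const x
    have b_zero : b 0 = 1 := b.one_of_mem_closedBall (by simp [b])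
    have b_tendsto : Tendsto b (𝓝 0) (𝓝 1) := by
      simpa only [b_zero] using hb.continuous.tendsto 0
    exact b_tendsto.comp scaled

variable [MeasurableSpace V] [BorelSpace V] {μ : Measure V} [μ.IsAddHaarMeasure]

lemma integral_divergence_eq_zero_of_hasCompactSupport {G : V → V} (hG : ContDiff ℝ 1 G)
    (hc : HasCompactSupport G) : ∫ x, divergence G x ∂μ = 0 := by
  let b := Module.finBasis ℝ V
  let coord (i) : V →L[ℝ] ℝ := LinearMap.toContinuousLinearMap (b.coord i)
  have cont_deriv (i) : Continuous fun x => fderiv ℝ G x (b i) :=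
    (hG.continuous_fderiv one_ne_zero).clm_apply continuous_const
  have int_deriv (i) : Integrable (fun x => fderiv ℝ G x (b i)) μ :=
    (cont_deriv i).integrable_of_hasCompactSupport (hc.fderiv_apply ℝ _)
  have deriv_zero (i) : ∫ x, fderiv ℝ G x (b i) ∂μ = 0 := by
    simpa using integral_smul_fderiv_eq_neg_fderiv_smul_of_integrable (μ := μ)
      (f := fun _ : V => (1 : ℝ)) (g := G) (v := b i) (by simp) (by simpa using int_deriv i)
      (by simpa using hG.continuous.integrable_of_hasCompactSupport hc)
      (fun _ _ => differentiableAt_const _) (fun x _ => hG.differentiable one_ne_zero x)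
  calc ∫ x, divergence G x ∂μ = ∫ x, ∑ i, coord i (fderiv ℝ G x (b i)) ∂μ := by
        simp only [divergence, traceCLM_eq_sum_coord b, coord,
          LinearMap.coe_toContinuousLinearMap']
    _ = ∑ i, coord i (∫ x, fderiv ℝ G x (b i) ∂μ) := by
        rw [integral_finsetSum _ fun i _ => (coord i).integrable_comp (int_deriv i)]
        exact Finset.sum_congr rfl fun i _ => (coord i).integral_comp_comm (int_deriv i)
    _ = 0 := by simp only [deriv_zero, map_zero, Finset.sum_const_zero]

theorem integral_divergence_eq_zero {G : V → V} (hG : ContDiff ℝ 1 G) (hi : Integrable G μ)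
    (hd : Integrable (divergence G) μ) : ∫ x, divergence G x ∂μ = 0 := by
  obtain ⟨χ, C, hχ, hχc, χ_le, dχ_le, χ_tendsto⟩ := exists_cutoff_seq V
  have C_nonneg : 0 ≤ C := by simpa using (norm_nonneg _).trans (dχ_le 0 0)
  have apply_le (n : ℕ) (x : V) : ‖fderiv ℝ (χ n) x (G x)‖ ≤ C / (n + 1) * ‖G x‖ :=
    ((fderiv ℝ (χ n) x).le_opNorm _).trans (mul_le_mul_of_nonneg_right (dχ_le n x) (norm_nonneg _))
  have cutoff_zero (n : ℕ) : ∫ x, fderiv ℝ (χ n) x (G x) + χ n x * divergence G x ∂μ = 0 := by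
    rw [← integral_divergence_eq_zero_of_hasCompactSupport (μ := μ) ((hχ n).smul hG)
      (hχc n).smul_right]
    exact integral_congr_ae (.of_forall fun x => (divergence_smul
      ((hχ n).differentiable one_ne_zero x) (hG.differentiable one_ne_zero x)).symm)
  refine tendsto_nhds_unique (l := atTop) ?_
    (tendsto_const_nhds.congr fun n => (cutoff_zero n).symm)
  refine tendsto_integral_of_dominated_convergence (fun x => C * ‖G x‖ + ‖divergence G x‖)
    (fun n => ((((hχ n).continuous_fderiv one_ne_zero).clm_apply hG.continuous).add
      ((hχ n).continuous.mul (continuous_divergence hG))).aestronglyMeasurable)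
    ((hi.norm.const_mul C).add hd.norm) (fun n => .of_forall fun x => ?_) (.of_forall fun x => ?_)
  · refine (norm_add_le _ _).trans (add_le_add ((apply_le n x).trans ?_) ?_)
    · gcongr
      exact div_le_self C_nonneg (by simp)
    · rw [norm_mul]
      exact mul_le_of_le_one_left (norm_nonneg _) (χ_le n x)
  · have bound_tendsto : Tendsto (fun n : ℕ => C / (n + 1) * ‖G x‖) atTop (𝓝 0) := by
      simpa [div_eq_mul_inv] using
        ((tendsto_one_div_add_atTop_nhds_zero_nat (𝕜 := ℝ)).const_mul C).mul_const ‖G x‖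
    simpa using (squeeze_zero_norm (apply_le · x) bound_tendsto).add
      ((χ_tendsto x).mul_const (divergence G x))

end Divergence

section SecondMoments

variable {α E : Type*} [MeasurableSpace α] {μ : Measure α} [NormedAddCommGroup E]
  [InnerProductSpace ℝ E]

lemma integrable_inner_of_memLp_two {f g : α → E} (hf : MemLp f 2 μ) (hg : MemLp g 2 μ) :
    Integrable (fun a => ⟪f a, g a⟫) μ :=
  (hf.norm.integrable_mul hg.norm).mono' (hf.1.inner hg.1)
    (.of_forall fun _ => norm_inner_le_norm _ _)

lemma measureReal_univ_mul_norm_average_sq_le [CompleteSpace E] [IsFiniteMeasure μ] {f : α → E}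
    (hf : MemLp f 2 μ) : μ.real univ * ‖⨍ a, f a ∂μ‖ ^ 2 ≤ ∫ a, ‖f a‖ ^ 2 ∂μ := by
  rcases eq_zero_or_neZero μ with rfl | _
  · simp
  have jensen : ‖⨍ a, f a ∂μ‖ ^ 2 ≤ ⨍ a, ‖f a‖ ^ 2 ∂μ :=
    (convexOn_univ_norm.pow (fun _ _ => norm_nonneg _) 2).map_average_le (by fun_prop) isClosed_univ
      (by simp) (hf.integrable one_le_two) hf.integrable_norm_pow'
  calc μ.real univ * ‖⨍ a, f a ∂μ‖ ^ 2 ≤ μ.real univ • ⨍ a, ‖f a‖ ^ 2 ∂μ := by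
        rw [smul_eq_mul]; gcongr
    _ = ∫ a, ‖f a‖ ^ 2 ∂μ := measure_smul_average μ _

end SecondMoments

section Gibbs

variable {α : Type*} [MeasurableSpace α] {μ : Measure α} {φ : α → ℝ}

/-- The (unnormalised) measure with density `exp (-φ)` with respect to `μ`. -/
noncomputable def gibbsMeasure (μ : Measure α) (φ : α → ℝ) : Measure α :=
  μ.withDensity fun a => ENNReal.ofReal (exp (-φ a))

variable {V : Type*} [NormedAddCommGroup V] [NormedSpace ℝ V]

lemma integral_gibbsMeasure (hφ : Measurable φ) (k : α → V) :
    ∫ a, k a ∂gibbsMeasure μ φ = ∫ a, exp (-φ a) • k a ∂μ := by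
  rw [gibbsMeasure, integral_withDensity_eq_integral_toReal_smul (by fun_prop) (by simp)]
  simp only [ENNReal.toReal_ofReal (exp_pos _).le]

lemma integrable_gibbsMeasure_iff (hφ : Measurable φ) {k : α → V} :
    Integrable k (gibbsMeasure μ φ) ↔ Integrable (fun a => exp (-φ a) • k a) μ := by
  rw [gibbsMeasure, integrable_withDensity_iff_integrable_smul' (by fun_prop) (by simp)]
  simp only [ENNReal.toReal_ofReal (exp_pos _).le]

section Stein

variable {V : Type*} [NormedAddCommGroup V] [NormedSpace ℝ V] [FiniteDimensional ℝ V] {φ : V → ℝ}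
  {G : V → V} {x : V}

/-- The divergence of `G` with respect to the Gibbs measure of potential `φ`, that is, minus the
formal adjoint of the derivative: `div G - Dφ(G)`. -/
noncomputable def weightedDivergence (φ : V → ℝ) (G : V → V) (x : V) : ℝ :=
  divergence G x - fderiv ℝ φ x (G x)

lemma divergence_exp_neg_smul (hφ : DifferentiableAt ℝ φ x) (hG : DifferentiableAt ℝ G x) :
    divergence (fun y => exp (-φ y) • G y) x = exp (-φ x) * weightedDivergence φ G x := by
  rw [divergence_smul hφ.fun_neg.exp hG, fderiv_exp hφ.fun_neg, fderiv_fun_neg, weightedDivergence]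
  simp only [smul_neg, neg_apply, smul_apply, smul_eq_mul]
  ring

lemma weightedDivergence_smul {a : V → ℝ} (ha : DifferentiableAt ℝ a x)
    (hG : DifferentiableAt ℝ G x) :
    weightedDivergence φ (fun y => a y • G y) x
      = fderiv ℝ a x (G x) + a x * weightedDivergence φ G x := by
  simp only [weightedDivergence, divergence_smul ha hG, map_smul, smul_eq_mul]
  ring

lemma continuous_weightedDivergence (hφ : ContDiff ℝ 1 φ) (hG : ContDiff ℝ 1 G) :
    Continuous (weightedDivergence φ G) :=
  (continuous_divergence hG).sub ((hφ.continuous_fderiv one_ne_zero).clm_apply hG.continuous)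

theorem integral_weightedDivergence_eq_zero [MeasurableSpace V] [BorelSpace V] {μ : Measure V}
    [μ.IsAddHaarMeasure] (hφ : ContDiff ℝ 1 φ) (hG : ContDiff ℝ 1 G)
    (hi : Integrable G (gibbsMeasure μ φ))
    (hd : Integrable (weightedDivergence φ G) (gibbsMeasure μ φ)) :
    ∫ x, weightedDivergence φ G x ∂gibbsMeasure μ φ = 0 := by
  have hφm : Measurable φ := hφ.continuous.measurable
  have div_eq (x : V) : exp (-φ x) • weightedDivergence φ G x
      = divergence (fun y => exp (-φ y) • G y) x :=
    (divergence_exp_neg_smul (hφ.differentiable one_ne_zero x)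
      (hG.differentiable one_ne_zero x)).symm
  rw [integrable_gibbsMeasure_iff hφm] at hi hd
  rw [integral_gibbsMeasure hφm]
  simp only [div_eq] at hd ⊢
  exact integral_divergence_eq_zero (hφ.neg.exp.smul hG) hi hd

end Stein

end Gibbs

section Fubini

variable {X E : Type*} [MeasurableSpace X] [MeasurableSpace E] {μ : Measure X} {ν : Measure E}
  [SFinite μ] [SFinite ν] {φ : X × E → ℝ}

lemma ae_integrable_fiber {V : Type*} [NormedAddCommGroup V] [NormedSpace ℝ V] (hφ : Measurable φ)
    {k : X × E → V} (hk : Integrable k (gibbsMeasure (μ.prod ν) φ)) :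
    ∀ᵐ x ∂μ, Integrable (fun ξ => k (x, ξ)) (gibbsMeasure ν fun ξ => φ (x, ξ)) := by
  filter_upwards [((integrable_gibbsMeasure_iff hφ).1 hk).prod_right_ae] with x hx
  exact (integrable_gibbsMeasure_iff (by fun_prop)).2 hx

lemma integral_gibbsMeasure_prod {V : Type*} [NormedAddCommGroup V] [NormedSpace ℝ V]
    (hφ : Measurable φ) {k : X × E → V} (hk : Integrable k (gibbsMeasure (μ.prod ν) φ)) :
    ∫ p, k p ∂gibbsMeasure (μ.prod ν) φ
      = ∫ x, ∫ ξ, k (x, ξ) ∂(gibbsMeasure ν fun ξ => φ (x, ξ)) ∂μ := by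
  rw [integral_gibbsMeasure hφ, integral_prod _ ((integrable_gibbsMeasure_iff hφ).1 hk)]
  refine integral_congr_ae (.of_forall fun x => ?_)
  exact (integral_gibbsMeasure (φ := fun ξ => φ (x, ξ)) (by fun_prop) _).symm

lemma integral_gibbsMeasure_comp_fst (hφ : Measurable φ) {k : X → ℝ}
    (hk : Integrable (fun p => k p.1) (gibbsMeasure (μ.prod ν) φ)) :
    ∫ p, k p.1 ∂gibbsMeasure (μ.prod ν) φ = ∫ x, (∫ ξ, exp (-φ (x, ξ)) ∂ν) * k x ∂μ := by
  rw [integral_gibbsMeasure hφ, integral_prod _ ((integrable_gibbsMeasure_iff hφ).1 hk)]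
  simp only [smul_eq_mul, integral_mul_const]

lemma ae_isFiniteMeasure_fiber (hφ : Measurable φ) [IsFiniteMeasure (gibbsMeasure (μ.prod ν) φ)] :
    ∀ᵐ x ∂μ, IsFiniteMeasure (gibbsMeasure ν fun ξ => φ (x, ξ)) := by
  filter_upwards [ae_integrable_fiber hφ
    (integrable_const (μ := gibbsMeasure (μ.prod ν) φ) (1 : ℝ))] with x hx
  exact (integrable_const_iff_isFiniteMeasure one_ne_zero).1 hx

end Fubini

section MeanVelocity

variable {X E : Type*} [MeasurableSpace X] [MeasurableSpace E] [NormedAddCommGroup E]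
  [InnerProductSpace ℝ E] {μ : Measure X} {ν : Measure E} {φ : X × E → ℝ}

/-- The mean velocity at position `x` of particles of phase-space density `exp (-φ)`. It is `0`
where the spatial density vanishes or is infinite. -/
noncomputable def meanVelocity (ν : Measure E) (φ : X × E → ℝ) (x : X) : E :=
  ⨍ ξ, ξ ∂gibbsMeasure ν fun ξ => φ (x, ξ)

lemma meanVelocity_eq (hφ : Measurable φ) (x : X) :
    meanVelocity ν φ x
      = (∫ ξ, exp (-φ (x, ξ)) ∂ν)⁻¹ • ∫ ξ, exp (-φ (x, ξ)) • ξ ∂ν := by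
  have hφx : Measurable fun ξ => φ (x, ξ) := by fun_prop
  have mass := integral_gibbsMeasure (μ := ν) hφx fun _ => (1 : ℝ)
  rw [meanVelocity, average_eq, integral_gibbsMeasure hφx]
  simp only [integral_const, smul_eq_mul, mul_one] at mass
  rw [mass]

variable [SFinite μ] [SFinite ν] [FiniteDimensional ℝ E] [BorelSpace E]

lemma stronglyMeasurable_meanVelocity (hφ : Measurable φ) :
    StronglyMeasurable (meanVelocity ν φ) := by
  have hexp : StronglyMeasurable fun p : X × E => exp (-φ p) := by fun_prop
  simp only [funext (meanVelocity_eq (ν := ν) hφ)]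
  exact hexp.integral_prod_right.inv₀.smul
    (hexp.smul measurable_snd.stronglyMeasurable).integral_prod_right

lemma ae_memLp_velocity_fiber (hφ : Measurable φ)
    (hξ : MemLp (fun p => p.2) 2 (gibbsMeasure (μ.prod ν) φ)) :
    ∀ᵐ x ∂μ, MemLp (fun ξ => ξ) 2 (gibbsMeasure ν fun ξ => φ (x, ξ)) := by
  filter_upwards [ae_integrable_fiber hφ (hξ.integrable_norm_pow two_ne_zero)] with x hx
  exact (memLp_two_iff_integrable_sq_norm (by fun_prop)).2 hx

theorem memLp_meanVelocity (hφ : Measurable φ) [IsFiniteMeasure (gibbsMeasure (μ.prod ν) φ)]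
    (hξ : MemLp (fun p => p.2) 2 (gibbsMeasure (μ.prod ν) φ)) :
    MemLp (fun p => meanVelocity ν φ p.1) 2 (gibbsMeasure (μ.prod ν) φ) := by
  have meas : StronglyMeasurable fun p : X × E => meanVelocity ν φ p.1 :=
    (stronglyMeasurable_meanVelocity hφ).comp_measurable measurable_fst
  have energy := (integrable_gibbsMeasure_iff hφ).1 hξ.integrable_norm_pow'
  rw [memLp_two_iff_integrable_sq_norm meas.aestronglyMeasurable, integrable_gibbsMeasure_iff hφ]
  have hexp : StronglyMeasurable fun p : X × E => exp (-φ p) := by fun_prop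
  have meas_sq : StronglyMeasurable fun p : X × E => exp (-φ p) • ‖meanVelocity ν φ p.1‖ ^ 2 :=
    hexp.smul (meas.norm.pow 2)
  refine (integrable_prod_iff meas_sq.aestronglyMeasurable).2 ⟨?_, energy.integral_prod_left.mono'
    meas_sq.norm.integral_prod_right.aestronglyMeasurable ?_⟩
  · filter_upwards [ae_isFiniteMeasure_fiber (μ := μ) (ν := ν) hφ] with x hx
    exact (integrable_gibbsMeasure_iff (by fun_prop)).1 (integrable_const _)
  · filter_upwards [ae_isFiniteMeasure_fiber (μ := μ) (ν := ν) hφ, ae_memLp_velocity_fiber hφ hξ]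
      with x hx hξx
    have hφx : Measurable fun ξ => φ (x, ξ) := by fun_prop
    have jensen : _ * ‖meanVelocity ν φ x‖ ^ 2 ≤ _ := measureReal_univ_mul_norm_average_sq_le hξx
    rw [← smul_eq_mul, ← integral_const, integral_gibbsMeasure hφx, integral_gibbsMeasure hφx]
      at jensen
    rw [Real.norm_of_nonneg (integral_nonneg fun _ => norm_nonneg _)]
    simpa only [smul_eq_mul, norm_mul, norm_pow, norm_norm, Real.norm_of_nonneg (exp_pos _).le]
      using jensen

theorem integral_inner_sub_meanVelocity (hφ : Measurable φ)
    [IsFiniteMeasure (gibbsMeasure (μ.prod ν) φ)]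
    (hξ : MemLp (fun p => p.2) 2 (gibbsMeasure (μ.prod ν) φ)) {b : X → E}
    (hb : MemLp (fun p => b p.1) 2 (gibbsMeasure (μ.prod ν) φ)) :
    ∫ p, ⟪b p.1, p.2 - meanVelocity ν φ p.1⟫ ∂gibbsMeasure (μ.prod ν) φ = 0 := by
  have int_inner : Integrable (fun p => ⟪b p.1, p.2 - meanVelocity ν φ p.1⟫)
      (gibbsMeasure (μ.prod ν) φ) :=
    integrable_inner_of_memLp_two hb (hξ.sub (memLp_meanVelocity hφ hξ))
  rw [integral_gibbsMeasure_prod hφ int_inner]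
  refine integral_eq_zero_of_ae ?_
  filter_upwards [ae_isFiniteMeasure_fiber (μ := μ) (ν := ν) hφ, ae_memLp_velocity_fiber hφ hξ]
    with x hx hξx
  have int_ξ := hξx.integrable one_le_two
  exact (integral_inner (int_ξ.sub (integrable_const _)) (b x)).trans
    (by simp only [Pi.sub_apply, meanVelocity, integral_sub_average, inner_zero_right,
      Pi.zero_apply])

theorem integral_weightedDivergence_fiber_eq_zero [ν.IsAddHaarMeasure] (hφ : Measurable φ)
    (hφx : ∀ x, ContDiff ℝ 1 fun ξ => φ (x, ξ)) {G : X × E → E}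
    (hGx : ∀ x, ContDiff ℝ 1 fun ξ => G (x, ξ)) (hG : Integrable G (gibbsMeasure (μ.prod ν) φ))
    (hd : Integrable (fun p : X × E => weightedDivergence (fun ξ => φ (p.1, ξ))
      (fun ξ => G (p.1, ξ)) p.2) (gibbsMeasure (μ.prod ν) φ)) :
    ∫ p, weightedDivergence (fun ξ => φ (p.1, ξ)) (fun ξ => G (p.1, ξ)) p.2
      ∂gibbsMeasure (μ.prod ν) φ = 0 := by
  rw [integral_gibbsMeasure_prod hφ hd]
  refine integral_eq_zero_of_ae ?_
  filter_upwards [ae_integrable_fiber hφ hG, ae_integrable_fiber hφ hd] with x hGi hdi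
  exact integral_weightedDivergence_eq_zero (hφx x) (hGx x) hGi hdi

end MeanVelocity

section PolynomialGrowth

variable {α β X X' V W : Type*} [NormedAddCommGroup X] [NormedAddCommGroup X']
  [NormedAddCommGroup V] [NormedAddCommGroup W] {l : Filter α} {w : α → X}

/-- `h` is bounded along `l` by a multiple of a power of `1 + ‖w‖`. Global polynomial growth in `x`
is the case `l = ⊤`, `w = id`; polynomial growth in `x`, uniform for `t ∈ J`, is the case
`l = 𝓟 (J ×ˢ univ)`, `w (t, x) = x`. -/
def IsPolyBounded (l : Filter α) (w : α → X) (h : α → V) : Prop :=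
  ∃ k : ℕ, h =O[l] fun a => (1 + ‖w a‖) ^ k

namespace IsPolyBounded

variable {f : α → V} {g : α → W}

lemma of_isBigO (hg : IsPolyBounded l w g) (hfg : f =O[l] g) : IsPolyBounded l w f :=
  hg.imp fun _ hk => hfg.trans hk

lemma of_norm_le (hg : IsPolyBounded l w g) (hfg : ∀ a, ‖f a‖ ≤ ‖g a‖) : IsPolyBounded l w f :=
  hg.of_isBigO (IsBigO.of_norm_le hfg).of_norm_right

lemma of_eventually_norm_le {c : ℝ} {k : ℕ} (h : ∀ᶠ a in l, ‖f a‖ ≤ c * (1 + ‖w a‖) ^ k) :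
    IsPolyBounded l w f :=
  ⟨k, .of_bound c (h.mono fun a ha => by
    rwa [Real.norm_of_nonneg (by positivity : (0 : ℝ) ≤ (1 + ‖w a‖) ^ k)])⟩

lemma exists_norm_le {S : Set α} (hf : IsPolyBounded (𝓟 S) w f) :
    ∃ c ≥ 0, ∃ k : ℕ, ∀ a ∈ S, ‖f a‖ ≤ c * (1 + ‖w a‖) ^ k := by
  obtain ⟨k, hk⟩ := hf
  obtain ⟨c, hc, hck⟩ := hk.exists_nonneg
  refine ⟨c, hc, k, fun a ha => (isBigOWith_principal.1 hck a ha).trans_eq ?_⟩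
  rw [Real.norm_of_nonneg (by positivity)]

lemma comp {l' : Filter β} {w' : β → X'} {s : β → α} (hf : IsPolyBounded l w f)
    (hs : Tendsto s l' l) (hw : ∀ b, ‖w (s b)‖ ≤ ‖w' b‖) : IsPolyBounded l' w' (f ∘ s) := by
  obtain ⟨k, hk⟩ := hf
  refine ⟨k, (hk.comp_tendsto hs).trans (.of_norm_le fun b => ?_)⟩
  rw [Function.comp_apply, Real.norm_of_nonneg (by positivity)]
  gcongr
  exact hw b

lemma const (c : V) : IsPolyBounded l w fun _ => c :=
  ⟨0, by simpa only [pow_zero] using isBigO_const_const c one_ne_zero l⟩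

lemma weight : IsPolyBounded l w w :=
  ⟨1, .of_norm_le fun a => by rw [pow_one]; exact le_add_of_nonneg_left zero_le_one⟩

lemma neg (hf : IsPolyBounded l w f) : IsPolyBounded l w fun a => -f a :=
  hf.of_norm_le fun _ => (norm_neg _).le

lemma norm (hf : IsPolyBounded l w f) : IsPolyBounded l w fun a => ‖f a‖ :=
  hf.of_norm_le fun _ => (norm_norm _).le

lemma add {g : α → V} (hf : IsPolyBounded l w f) (hg : IsPolyBounded l w g) :
    IsPolyBounded l w fun a => f a + g a := by
  have weight_mono {j k : ℕ} (hjk : j ≤ k) :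
      (fun a => (1 + ‖w a‖) ^ j) =O[l] fun a => (1 + ‖w a‖) ^ k := .of_norm_le fun a => by
    rw [Real.norm_of_nonneg (by positivity)]
    exact pow_le_pow_right₀ (le_add_of_nonneg_right (norm_nonneg _)) hjk
  obtain ⟨j, hj⟩ := hf
  obtain ⟨k, hk⟩ := hg
  exact ⟨max j k, (hj.trans (weight_mono (le_max_left _ _))).add
    (hk.trans (weight_mono (le_max_right _ _)))⟩

lemma sub {g : α → V} (hf : IsPolyBounded l w f) (hg : IsPolyBounded l w g) :
    IsPolyBounded l w fun a => f a - g a := by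
  simpa only [sub_eq_add_neg] using hf.add hg.neg

lemma mul {f g : α → ℝ} (hf : IsPolyBounded l w f) (hg : IsPolyBounded l w g) :
    IsPolyBounded l w fun a => f a * g a := by
  obtain ⟨j, hj⟩ := hf
  obtain ⟨k, hk⟩ := hg
  exact ⟨j + k, by simpa only [pow_add] using hj.mul hk⟩

lemma pow {f : α → ℝ} (hf : IsPolyBounded l w f) (n : ℕ) : IsPolyBounded l w fun a => f a ^ n := by
  obtain ⟨k, hk⟩ := hf
  exact ⟨k * n, by simpa only [pow_mul] using hk.pow n⟩

lemma of_norm_le_mul {U : Type*} [NormedAddCommGroup U] {h : α → U} (hf : IsPolyBounded l w f)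
    (hg : IsPolyBounded l w g) (hle : ∀ a, ‖h a‖ ≤ ‖f a‖ * ‖g a‖) : IsPolyBounded l w h :=
  (hf.norm.mul hg.norm).of_norm_le fun a => (hle a).trans (le_abs_self _)

lemma inner [InnerProductSpace ℝ V] {g : α → V} (hf : IsPolyBounded l w f)
    (hg : IsPolyBounded l w g) : IsPolyBounded l w fun a => ⟪f a, g a⟫ :=
  hf.of_norm_le_mul hg fun _ => norm_inner_le_norm _ _

lemma smul [NormedSpace ℝ V] {c : α → ℝ} (hc : IsPolyBounded l w c) (hf : IsPolyBounded l w f) :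
    IsPolyBounded l w fun a => c a • f a :=
  hc.of_norm_le_mul hf fun _ => norm_smul_le _ _

lemma prodMk (hf : IsPolyBounded l w f) (hg : IsPolyBounded l w g) :
    IsPolyBounded l w fun a => (f a, g a) :=
  (hf.norm.add hg.norm).of_norm_le fun _ => (max_le (le_add_of_nonneg_right (norm_nonneg _))
    (le_add_of_nonneg_left (norm_nonneg _))).trans (le_abs_self _)

lemma clm_apply [NormedSpace ℝ V] [NormedSpace ℝ W] {S : α → V →L[ℝ] W}
    (hS : IsPolyBounded l w S) (hf : IsPolyBounded l w f) : IsPolyBounded l w fun a => S a (f a) :=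
  hS.of_norm_le_mul hf fun a => (S a).le_opNorm (f a)

lemma comp_fst {f : X → V} (hf : IsPolyBounded ⊤ id f) :
    IsPolyBounded ⊤ id fun p : X × X' => f p.1 :=
  hf.comp tendsto_top norm_fst_le

end IsPolyBounded

lemma isPolyBounded_snd : IsPolyBounded ⊤ id fun p : X × X' => p.2 :=
  IsPolyBounded.weight.of_norm_le norm_snd_le

lemma isPolyBounded_of_fderiv {V : Type*} [NormedAddCommGroup V] [NormedSpace ℝ V] {T : ℝ}
    {ψ : ℝ × V → ℝ} (hψ : DifferentiableOn ℝ ψ (Ioo 0 T ×ˢ univ))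
    (hψ' : IsPolyBounded (𝓟 (Ioo 0 T ×ˢ univ)) Prod.snd (fderiv ℝ ψ)) :
    IsPolyBounded (𝓟 (Ioo 0 T ×ˢ univ)) Prod.snd ψ := by
  rcases (Ioo 0 T).eq_empty_or_nonempty with hT | ⟨t₀, ht₀⟩
  · exact ⟨0, by simp only [hT, empty_prod, principal_empty, isBigO_bot]⟩
  obtain ⟨c, hc, k, hck⟩ := hψ'.exists_norm_le
  refine .of_eventually_norm_le (c := ‖ψ (t₀, 0)‖ + c * (1 + T)) (k := k + 1)
    (eventually_principal.2 ?_)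
  rintro ⟨t, p⟩ ht
  set K : Set (ℝ × V) := Ioo 0 T ×ˢ Metric.closedBall 0 ‖p‖
  have mem_slab {q : ℝ × V} (hq : q ∈ K) : q ∈ Ioo 0 T ×ˢ (univ : Set V) := ⟨hq.1, mem_univ _⟩
  have slab_open : IsOpen (Ioo 0 T ×ˢ (univ : Set V)) := isOpen_Ioo.prod isOpen_univ
  have fderiv_le (q : ℝ × V) (hq : q ∈ K) : ‖fderiv ℝ ψ q‖ ≤ c * (1 + ‖p‖) ^ k := by
    refine (hck q (mem_slab hq)).trans ?_
    gcongr
    exact mem_closedBall_zero_iff.1 hq.2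
  have increment : ‖ψ (t, p) - ψ (t₀, 0)‖ ≤ c * (1 + ‖p‖) ^ k * ‖(t, p) - (t₀, 0)‖ :=
    ((convex_Ioo 0 T).prod (convex_closedBall 0 ‖p‖)).norm_image_sub_le_of_norm_fderiv_le
      (fun q hq => hψ.differentiableAt (slab_open.mem_nhds (mem_slab hq))) fderiv_le
      ⟨ht₀, by simp⟩ ⟨ht.1, by simp⟩
  have dist_le : ‖(t, p) - (t₀, 0)‖ ≤ (1 + T) * (1 + ‖p‖) := by
    have T_pos : 0 < T := ht₀.1.trans ht₀.2
    have time_le : |t - t₀| ≤ T :=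
      abs_le.2 ⟨by linarith [ht.1.1, ht₀.2], by linarith [ht.1.2, ht₀.1]⟩
    rw [Prod.mk_sub_mk, sub_zero, Prod.norm_mk, Real.norm_eq_abs]
    refine max_le ?_ ?_ <;> nlinarith [norm_nonneg p]
  calc ‖ψ (t, p)‖ ≤ ‖ψ (t₀, 0)‖ + ‖ψ (t, p) - ψ (t₀, 0)‖ := norm_le_insert' _ _
    _ ≤ ‖ψ (t₀, 0)‖ * (1 + ‖p‖) ^ (k + 1)
        + c * (1 + ‖p‖) ^ k * ((1 + T) * (1 + ‖p‖)) := by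
      gcongr
      · exact le_mul_of_one_le_right (norm_nonneg _) (one_le_pow₀ (by simp))
      · exact increment.trans (by gcongr)
    _ = _ := by ring

section Moments

variable [MeasurableSpace X] {γ : Measure X} {f : X → V}

lemma IsPolyBounded.integrable (hf : IsPolyBounded ⊤ id f) (hfm : AEStronglyMeasurable f γ)
    (hγ : ∀ N : ℕ, Integrable (fun x => (1 + ‖x‖) ^ N) γ) : Integrable f γ := by
  obtain ⟨k, hk⟩ := hf
  exact hk.integrable hfm (hγ k)

lemma IsPolyBounded.memLp_two (hf : IsPolyBounded ⊤ id f) (hfm : AEStronglyMeasurable f γ)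
    (hγ : ∀ N : ℕ, Integrable (fun x => (1 + ‖x‖) ^ N) γ) : MemLp f 2 γ :=
  (memLp_two_iff_integrable_sq_norm hfm).2 ((hf.norm.pow 2).integrable (hfm.norm.pow 2) hγ)

end Moments

end PolynomialGrowth

section Dissipation

variable {X E : Type*} [MeasurableSpace X] [NormedAddCommGroup E] [InnerProductSpace ℝ E]
  [FiniteDimensional ℝ E]

/-- The gradient `∇_ξ φ` of a phase-space potential in the velocity variable. -/
noncomputable def velocityGradient (φ : X × E → ℝ) (p : X × E) : E :=
  gradient (fun ξ => φ (p.1, ξ)) p.2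

variable [MeasurableSpace E] [BorelSpace E]

/-- The relative flux `ξ - ∇_ξ φ - v`, with `v` the mean velocity. In terms of the density
`f = exp (-φ)` it is `f⁻¹ (∇_ξ f + (ξ - v) f)`, whose second moment is the dissipation. -/
noncomputable def relativeFlux (ν : Measure E) (φ : X × E → ℝ) (p : X × E) : E :=
  p.2 - velocityGradient φ p - meanVelocity ν φ p.1

variable {μ : Measure X} {ν : Measure E} {φ : X × E → ℝ}

variable [SFinite μ] [ν.IsAddHaarMeasure] [IsFiniteMeasure (gibbsMeasure (μ.prod ν) φ)]

local notation "γ" => gibbsMeasure (Measure.prod μ ν) φ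

lemma memLp_relativeFlux (hφ : Measurable φ) (hξ : MemLp (fun p => p.2) 2 γ)
    (hn : MemLp (velocityGradient φ) 2 γ) : MemLp (relativeFlux ν φ) 2 γ :=
  (hξ.sub hn).sub (memLp_meanVelocity hφ hξ)

lemma integral_inner_relativeFlux (hφ : Measurable φ) (hφx : ∀ x, ContDiff ℝ 1 fun ξ => φ (x, ξ))
    (hξ : MemLp (fun p => p.2) 2 γ) (hn : MemLp (velocityGradient φ) 2 γ) {b : X → E}
    (hb : MemLp (fun p => b p.1) 2 γ) : ∫ p, ⟪b p.1, relativeFlux ν φ p⟫ ∂γ = 0 := by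
  have hdev : MemLp (fun p => p.2 - meanVelocity ν φ p.1) 2 γ := hξ.sub (memLp_meanVelocity hφ hξ)
  have wdiv_const (p : X × E) : weightedDivergence (fun ξ => φ (p.1, ξ)) (fun _ => b p.1) p.2
      = -⟪b p.1, velocityGradient φ p⟫ := by
    rw [real_inner_comm, velocityGradient, inner_gradient_left]
    simp only [weightedDivergence, divergence, fderiv_const_apply, map_zero, zero_sub]
  have stein : ∫ p, ⟪b p.1, velocityGradient φ p⟫ ∂γ = 0 := by
    have := integral_weightedDivergence_fiber_eq_zero (G := fun p => b p.1) hφ hφx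
      (fun x => contDiff_const (c := b x)) (hb.integrable one_le_two)
      (by simpa only [wdiv_const] using (integrable_inner_of_memLp_two hb hn).fun_neg)
    simpa only [wdiv_const, integral_neg, neg_eq_zero] using this
  calc ∫ p, ⟪b p.1, relativeFlux ν φ p⟫ ∂γ
      = ∫ p, (⟪b p.1, p.2 - meanVelocity ν φ p.1⟫ - ⟪b p.1, velocityGradient φ p⟫) ∂γ := by
        simp only [relativeFlux, sub_right_comm _ (velocityGradient φ _), inner_sub_right]
    _ = 0 := by
        rw [integral_sub (integrable_inner_of_memLp_two hb hdev)
          (integrable_inner_of_memLp_two hb hn), integral_inner_sub_meanVelocity hφ hξ hb, stein,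
          sub_zero]

theorem integral_dissipation (hφ : Measurable φ) (hφx : ∀ x, ContDiff ℝ 1 fun ξ => φ (x, ξ))
    (hξ : MemLp (fun p => p.2) 2 γ) (hn : MemLp (velocityGradient φ) 2 γ) {u : X → E}
    (hu : MemLp (fun p => u p.1) 2 γ) :
    ∫ p, ⟪p.2 - velocityGradient φ p, p.2 - velocityGradient φ p - u p.1⟫ ∂γ
      = ∫ p, ‖relativeFlux ν φ p‖ ^ 2 ∂γ
        + ∫ p, ⟪meanVelocity ν φ p.1, meanVelocity ν φ p.1 - u p.1⟫ ∂γ := by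
  set v := meanVelocity ν φ
  set y := relativeFlux ν φ
  have hv : MemLp (fun p => v p.1) 2 γ := memLp_meanVelocity hφ hξ
  have hvu : MemLp (fun p => v p.1 - u p.1) 2 γ := hv.sub hu
  have hy : MemLp y 2 γ := memLp_relativeFlux hφ hξ hn
  have hb : MemLp (fun p => v p.1 + (v p.1 - u p.1)) 2 γ := hv.add hvu
  have expand (p : X × E) : ⟪p.2 - velocityGradient φ p, p.2 - velocityGradient φ p - u p.1⟫
      = ‖y p‖ ^ 2 + ⟪v p.1, v p.1 - u p.1⟫ + ⟪v p.1 + (v p.1 - u p.1), y p⟫ := by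
    have flux : p.2 - velocityGradient φ p = y p + v p.1 := (sub_add_cancel _ _).symm
    rw [flux, add_sub_assoc, inner_add_left, inner_add_right, inner_add_right, inner_add_left,
      real_inner_self_eq_norm_sq, real_inner_comm (y p) (v p.1 - u p.1)]
    ring
  have int_sq : Integrable (fun p => ‖y p‖ ^ 2) γ := hy.integrable_norm_pow'
  have int_v := integrable_inner_of_memLp_two hv hvu
  simp only [expand]
  rw [integral_add (int_sq.fun_add int_v) (integrable_inner_of_memLp_two hb hy),
    integral_add int_sq int_v,
    integral_inner_relativeFlux hφ hφx hξ hn (b := fun x => v x + (v x - u x)) hb, add_zero]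

lemma integral_norm_sub_meanVelocity_sq_le (hφ : Measurable φ) (hξ : MemLp (fun p => p.2) 2 γ) :
    ∫ p, ‖p.2 - meanVelocity ν φ p.1‖ ^ 2 ∂γ ≤ ∫ p, ‖p.2‖ ^ 2 ∂γ := by
  set v := meanVelocity ν φ
  have hv : MemLp (fun p => v p.1) 2 γ := memLp_meanVelocity hφ hξ
  have hdev : MemLp (fun p => p.2 - v p.1) 2 γ := hξ.sub hv
  have int_inner := integrable_inner_of_memLp_two hv hdev
  have pythagoras (p : X × E) :
      ‖p.2‖ ^ 2 = ‖p.2 - v p.1‖ ^ 2 + 2 * ⟪v p.1, p.2 - v p.1⟫ + ‖v p.1‖ ^ 2 := by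
    rw [real_inner_comm, ← norm_add_sq_real, sub_add_cancel]
  simp only [pythagoras]
  rw [integral_add (hdev.integrable_norm_pow'.fun_add (int_inner.const_mul 2))
    hv.integrable_norm_pow', integral_add hdev.integrable_norm_pow' (int_inner.const_mul 2),
    integral_const_mul, integral_inner_sub_meanVelocity hφ hξ hv, mul_zero, add_zero]
  exact le_add_of_nonneg_right (integral_nonneg fun _ => sq_nonneg _)

end Dissipation

section Strain

lemma memLp_clm_apply {α E F : Type*} [MeasurableSpace α] {μ : Measure α} [NormedAddCommGroup E]
    [NormedSpace ℝ E] [NormedAddCommGroup F] [NormedSpace ℝ F] {S : α → E →L[ℝ] F} {h : α → E}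
    {L : ℝ} (hS : AEStronglyMeasurable S μ) (hL : ∀ a, ‖S a‖ ≤ L) (hh : MemLp h 2 μ) :
    MemLp (fun a => S a (h a)) 2 μ :=
  hh.of_le_mul (isBoundedBilinearMap_apply.continuous.comp_aestronglyMeasurable₂ hS hh.1)
    (.of_forall fun a => (S a).le_of_opNorm_le (hL a) (h a))

lemma neg_inner_clm_apply_le {E : Type*} [NormedAddCommGroup E]
    [InnerProductSpace ℝ E] {A : E →L[ℝ] E} {L : ℝ} (hA : ‖A‖ ≤ L) (a c : E) :
    -⟪a, A c⟫ ≤ L * (‖a‖ * ‖c‖) :=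
  calc -⟪a, A c⟫ ≤ ‖a‖ * ‖A c‖ := (neg_le_abs _).trans (abs_real_inner_le_norm _ _)
    _ ≤ ‖a‖ * (L * ‖c‖) := by gcongr; exact A.le_of_opNorm_le hA c
    _ = L * (‖a‖ * ‖c‖) := mul_left_comm _ _ _

lemma mul_neg_inner_clm_apply_le {E : Type*} [NormedAddCommGroup E] [InnerProductSpace ℝ E]
    {A : E →L[ℝ] E} {B L τ : ℝ} (hB : 0 ≤ B) (hτ : 0 < τ) (hA : ‖A‖ ≤ L) (a c : E) :
    B * -⟪a, A c⟫ ≤ 1 / (2 * τ) * ‖a‖ ^ 2 + B ^ 2 * τ / 2 * L ^ 2 * ‖c‖ ^ 2 := by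
  have young := two_mul_le_add_mul_sq (a := ‖a‖) (b := B * L * ‖c‖) (inv_pos.2 hτ)
  calc B * -⟪a, A c⟫ ≤ B * (L * (‖a‖ * ‖c‖)) := by gcongr; exact neg_inner_clm_apply_le hA a c
    _ = 2 * ‖a‖ * (B * L * ‖c‖) / 2 := by ring
    _ ≤ (τ⁻¹ * ‖a‖ ^ 2 + τ⁻¹⁻¹ * (B * L * ‖c‖) ^ 2) / 2 := by gcongr
    _ = _ := by rw [inv_inv]; field_simp

lemma trace_sub_inner_clm_apply_eq {E : Type*} [NormedAddCommGroup E] [InnerProductSpace ℝ E]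
    [FiniteDimensional ℝ E] (S : E →L[ℝ] E) (ξ u v n : E) :
    traceCLM E S - ⟪ξ - u, S (ξ - u)⟫
      = (traceCLM E S - ⟪n, S (ξ - v)⟫) - ⟪S.adjoint (v - u) + S (v - u), ξ - v⟫
        - ⟪ξ - n - v, S (ξ - v)⟫ - ⟪v - u, S (v - u)⟫ := by
  have split : ξ - u = (ξ - v) + (v - u) := (sub_add_sub_cancel _ _ _).symm
  rw [split, sub_right_comm ξ n v, map_add, inner_add_left, inner_add_right, inner_add_right,
    inner_sub_left (ξ - v), inner_add_left, ContinuousLinearMap.adjoint_inner_left,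
    real_inner_comm (ξ - v) (S (v - u))]
  ring

variable {X E : Type*} [MeasurableSpace X] [NormedAddCommGroup E] [InnerProductSpace ℝ E]
  [FiniteDimensional ℝ E] [MeasurableSpace E] [BorelSpace E] {μ : Measure X} {ν : Measure E}
  {φ : X × E → ℝ} [SFinite μ] [ν.IsAddHaarMeasure] [IsFiniteMeasure (gibbsMeasure (μ.prod ν) φ)]
  {S : X → E →L[ℝ] E} {L : ℝ} {u : X → E}

local notation "γ" => gibbsMeasure (Measure.prod μ ν) φ

lemma integral_stein_affine (hφ : Measurable φ) (hφx : ∀ x, ContDiff ℝ 1 fun ξ => φ (x, ξ))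
    (hξ : MemLp (fun p => p.2) 2 γ) (hn : MemLp (velocityGradient φ) 2 γ)
    (hu : MemLp (fun p => u p.1) 2 γ) (hS : StronglyMeasurable S) (hL : ∀ x, ‖S x‖ ≤ L) :
    Integrable (fun p => traceCLM E (S p.1) - ⟪velocityGradient φ p, S p.1 (p.2 - u p.1)⟫) γ ∧
      ∫ p, (traceCLM E (S p.1) - ⟪velocityGradient φ p, S p.1 (p.2 - u p.1)⟫) ∂γ = 0 := by
  have hSfst : StronglyMeasurable fun p : X × E => S p.1 := hS.comp_measurable measurable_fst
  have hSdev : MemLp (fun p => S p.1 (p.2 - u p.1)) 2 γ :=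
    memLp_clm_apply hSfst.aestronglyMeasurable (fun p => hL p.1) (hξ.sub hu)
  have div_eq (p : X × E) :
      weightedDivergence (fun ξ => φ (p.1, ξ)) (fun ξ => S p.1 (ξ - u p.1)) p.2
        = traceCLM E (S p.1) - ⟪velocityGradient φ p, S p.1 (p.2 - u p.1)⟫ := by
    have deriv_eq : HasFDerivAt (fun ξ => S p.1 (ξ - u p.1)) (S p.1) p.2 :=
      (S p.1).hasFDerivAt.comp p.2 ((hasFDerivAt_id p.2).sub_const (u p.1))
    simp only [weightedDivergence, divergence, deriv_eq.fderiv, velocityGradient,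
      inner_gradient_left]
  have int_trace : Integrable (fun p => traceCLM E (S p.1)) γ :=
    .of_bound ((traceCLM E).continuous.comp_stronglyMeasurable hSfst).aestronglyMeasurable
      (‖traceCLM E‖ * L) (.of_forall fun p => (traceCLM E).le_opNorm_of_le (hL p.1))
  have int_div : Integrable
      (fun p => traceCLM E (S p.1) - ⟪velocityGradient φ p, S p.1 (p.2 - u p.1)⟫) γ :=
    int_trace.sub (integrable_inner_of_memLp_two hn hSdev)
  refine ⟨int_div, ?_⟩
  simpa only [div_eq] using integral_weightedDivergence_fiber_eq_zero
    (G := fun p => S p.1 (p.2 - u p.1)) hφ hφx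
    (fun x => (S x).contDiff.comp (contDiff_id.sub (contDiff_const (c := u x))))
    (hSdev.integrable one_le_two) (by simpa only [div_eq] using int_div)

theorem integral_strain (hφ : Measurable φ) (hφx : ∀ x, ContDiff ℝ 1 fun ξ => φ (x, ξ))
    (hξ : MemLp (fun p => p.2) 2 γ) (hn : MemLp (velocityGradient φ) 2 γ)
    (hu : MemLp (fun p => u p.1) 2 γ) (hS : StronglyMeasurable S) (hL : ∀ x, ‖S x‖ ≤ L) :
    ∫ p, (traceCLM E (S p.1) - ⟪p.2 - u p.1, S p.1 (p.2 - u p.1)⟫) ∂γ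
      = -∫ p, ⟪relativeFlux ν φ p, S p.1 (p.2 - meanVelocity ν φ p.1)⟫ ∂γ
        - ∫ p, ⟪meanVelocity ν φ p.1 - u p.1, S p.1 (meanVelocity ν φ p.1 - u p.1)⟫ ∂γ := by
  set v := meanVelocity ν φ
  set y := relativeFlux ν φ
  have hv : MemLp (fun p => v p.1) 2 γ := memLp_meanVelocity hφ hξ
  have hdev : MemLp (fun p => p.2 - v p.1) 2 γ := hξ.sub hv
  have hvu : MemLp (fun p => v p.1 - u p.1) 2 γ := hv.sub hu
  have hSfst : StronglyMeasurable fun p : X × E => S p.1 := hS.comp_measurable measurable_fst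
  have hSdev : MemLp (fun p => S p.1 (p.2 - v p.1)) 2 γ :=
    memLp_clm_apply hSfst.aestronglyMeasurable (fun p => hL p.1) hdev
  have hSvu : MemLp (fun p => S p.1 (v p.1 - u p.1)) 2 γ :=
    memLp_clm_apply hSfst.aestronglyMeasurable (fun p => hL p.1) hvu
  have hadj : MemLp (fun p => (S p.1).adjoint (v p.1 - u p.1)) 2 γ :=
    memLp_clm_apply (ContinuousLinearMap.adjoint.continuous.comp_stronglyMeasurable
      hSfst).aestronglyMeasurable
      (fun p => (LinearIsometryEquiv.norm_map _ _).trans_le (hL p.1)) hvu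
  set b : X → E := fun x => (S x).adjoint (v x - u x) + S x (v x - u x)
  have hb : MemLp (fun p => b p.1) 2 γ := hadj.add hSvu
  set w : X × E → ℝ := fun p => traceCLM E (S p.1) - ⟪velocityGradient φ p, S p.1 (p.2 - v p.1)⟫
  obtain ⟨int_stein, stein⟩ : Integrable w γ ∧ ∫ p, w p ∂γ = 0 :=
    integral_stein_affine hφ hφx hξ hn hv hS hL
  have expand (p : X × E) : traceCLM E (S p.1) - ⟪p.2 - u p.1, S p.1 (p.2 - u p.1)⟫
      = w p - ⟪b p.1, p.2 - v p.1⟫ - ⟪y p, S p.1 (p.2 - v p.1)⟫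
        - ⟪v p.1 - u p.1, S p.1 (v p.1 - u p.1)⟫ := trace_sub_inner_clm_apply_eq _ _ _ _ _
  have int_b := integrable_inner_of_memLp_two hb hdev
  have int_y : Integrable (fun p => ⟪y p, S p.1 (p.2 - v p.1)⟫) γ :=
    integrable_inner_of_memLp_two (memLp_relativeFlux hφ hξ hn) hSdev
  have int_stein_b : Integrable (fun p => w p - ⟪b p.1, p.2 - v p.1⟫) γ := int_stein.sub int_b
  have int_stein_b_y : Integrable
      (fun p => w p - ⟪b p.1, p.2 - v p.1⟫ - ⟪y p, S p.1 (p.2 - v p.1)⟫) γ := int_stein_b.sub int_y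
  simp only [expand]
  rw [integral_sub int_stein_b_y (integrable_inner_of_memLp_two hvu hSvu),
    integral_sub int_stein_b int_y, integral_sub int_stein int_b, stein,
    integral_inner_sub_meanVelocity hφ hξ hb, sub_zero, zero_sub]

theorem mul_integral_strain_le {B τ : ℝ} (hB : 0 ≤ B) (hτ : 0 < τ) (hφ : Measurable φ)
    (hφx : ∀ x, ContDiff ℝ 1 fun ξ => φ (x, ξ)) (hξ : MemLp (fun p => p.2) 2 γ)
    (hn : MemLp (velocityGradient φ) 2 γ) (hu : MemLp (fun p => u p.1) 2 γ)
    (hS : StronglyMeasurable S) (hL : ∀ x, ‖S x‖ ≤ L) :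
    B * ∫ p, (traceCLM E (S p.1) - ⟪p.2 - u p.1, S p.1 (p.2 - u p.1)⟫) ∂γ
      ≤ B * L * ∫ p, ‖meanVelocity ν φ p.1 - u p.1‖ ^ 2 ∂γ
        + 1 / (2 * τ) * ∫ p, ‖relativeFlux ν φ p‖ ^ 2 ∂γ
        + B ^ 2 * τ / 2 * L ^ 2 * ∫ p, ‖p.2‖ ^ 2 ∂γ := by
  set v := meanVelocity ν φ
  set y := relativeFlux ν φ
  have hv : MemLp (fun p => v p.1) 2 γ := memLp_meanVelocity hφ hξ
  have hdev : MemLp (fun p => p.2 - v p.1) 2 γ := hξ.sub hv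
  have hvu : MemLp (fun p => v p.1 - u p.1) 2 γ := hv.sub hu
  have hy : MemLp y 2 γ := memLp_relativeFlux hφ hξ hn
  have hSfst : AEStronglyMeasurable (fun p : X × E => S p.1) γ :=
    (hS.comp_measurable measurable_fst).aestronglyMeasurable
  have shear_le : B * ∫ p, -⟪y p, S p.1 (p.2 - v p.1)⟫ ∂γ
      ≤ 1 / (2 * τ) * ∫ p, ‖y p‖ ^ 2 ∂γ + B ^ 2 * τ / 2 * L ^ 2 * ∫ p, ‖p.2‖ ^ 2 ∂γ := by
    have int_y := hy.integrable_norm_pow'.const_mul (1 / (2 * τ))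
    have int_dev := hdev.integrable_norm_pow'.const_mul (B ^ 2 * τ / 2 * L ^ 2)
    have young_integrated := integral_mono ((integrable_inner_of_memLp_two hy
      (memLp_clm_apply hSfst (fun p => hL p.1) hdev)).fun_neg.const_mul B) (int_y.fun_add int_dev)
      fun p => mul_neg_inner_clm_apply_le hB hτ (hL p.1) (y p) (p.2 - v p.1)
    rw [integral_const_mul, integral_add int_y int_dev, integral_const_mul, integral_const_mul]
      at young_integrated
    refine young_integrated.trans ?_
    gcongr _ + _ * ?_
    exact integral_norm_sub_meanVelocity_sq_le hφ hξ
  have drift_le : ∫ p, -⟪v p.1 - u p.1, S p.1 (v p.1 - u p.1)⟫ ∂γ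
      ≤ L * ∫ p, ‖v p.1 - u p.1‖ ^ 2 ∂γ := by
    rw [← integral_const_mul]
    refine integral_mono (integrable_inner_of_memLp_two hvu
      (memLp_clm_apply hSfst (fun p => hL p.1) hvu)).fun_neg (hvu.integrable_norm_pow'.const_mul L)
      fun p => (neg_inner_clm_apply_le (hL _) _ _).trans_eq (by rw [sq])
  rw [integral_strain hφ hφx hξ hn hu hS hL, sub_eq_add_neg, ← integral_neg, ← integral_neg]
  linarith [mul_le_mul_of_nonneg_left drift_le hB]

end Strain

section FixedTime

variable {E : Type*} [NormedAddCommGroup E] [InnerProductSpace ℝ E]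

section Fields

variable {φ : E × E → ℝ} {r : E → ℝ} {u : E → E} {F : E × E → E} {B τ : ℝ} {p : E × E}

/-- The logarithm of the ratio of `exp (-φ)` to the Maxwellian of density `exp r` and velocity `u`,
where `c` stands for `log ((2π)^{d/2})`. -/
noncomputable def logMaxwellianRatio (c : ℝ) (φ : E × E → ℝ) (r : E → ℝ) (u : E → E) (p : E × E) :
    ℝ :=
  -φ p - r p.1 + c + ‖p.2 - u p.1‖ ^ 2 / 2

/-- The time derivative of `logMaxwellianRatio` when `-φ`, `r` and `u` have time derivatives `κ`,
`r'` and `u'`. -/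
def logMaxwellianRatioRate (κ : E × E → ℝ) (r' : E → ℝ) (u u' : E → E) (p : E × E) : ℝ :=
  κ p - r' p.1 - ⟪p.2 - u p.1, u' p.1⟫

lemma fderiv_logMaxwellianRatio (c : ℝ) (hφ : DifferentiableAt ℝ φ p)
    (hr : DifferentiableAt ℝ r p.1) (hu : DifferentiableAt ℝ u p.1) (z : E × E) :
    fderiv ℝ (logMaxwellianRatio c φ r u) p z
      = -fderiv ℝ φ p z - fderiv ℝ r p.1 z.1 + ⟪p.2 - u p.1, z.2 - fderiv ℝ u p.1 z.1⟫ := by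
  have deriv_r := hr.hasFDerivAt.comp p hasFDerivAt_fst
  have deriv_u := hu.hasFDerivAt.comp p hasFDerivAt_fst
  have deriv_sq := ((hasFDerivAt_snd (p := p)).sub deriv_u).norm_sq.mul_const (2⁻¹ : ℝ)
  have := (((hφ.hasFDerivAt.neg.sub deriv_r).add_const c).add deriv_sq)
  rw [HasFDerivAt.fderiv (f := logMaxwellianRatio c φ r u) this]
  simp [inner_sub_left, inner_sub_right]

lemma contDiff_logMaxwellianRatio (hφ : ContDiff ℝ 1 φ) (hr : ContDiff ℝ 1 r) (hu : ContDiff ℝ 1 u)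
    (c : ℝ) : ContDiff ℝ 1 (logMaxwellianRatio c φ r u) :=
  ((hφ.neg.sub (hr.comp contDiff_fst)).add contDiff_const).add
    ((((contDiff_snd.sub (hu.comp contDiff_fst)).norm_sq ℝ).div_const 2))

/-- The phase-space velocity field `(B ξ, F)` of transport under the force `F`. -/
def transportField (B : ℝ) (F : E × E → E) (p : E × E) : E × E := (B • p.2, F p)

lemma contDiff_transportField (hF : ContDiff ℝ 1 F) : ContDiff ℝ 1 (transportField B F) :=
  (contDiff_const.smul contDiff_snd).prodMk hF

variable [FiniteDimensional ℝ E]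

lemma inner_velocityGradient (hφ : DifferentiableAt ℝ φ p) (k : E) :
    ⟪velocityGradient φ p, k⟫ = fderiv ℝ φ p (0, k) := by
  have slice : HasFDerivAt (fun ξ => φ (p.1, ξ)) (fderiv ℝ φ p ∘L .inr ℝ E E) p.2 :=
    hφ.hasFDerivAt.comp p.2 (hasFDerivAt_prodMk_right p.1 p.2)
  rw [velocityGradient, inner_gradient_left, slice.fderiv]
  rfl

lemma velocityGradient_eq (hφ : Differentiable ℝ φ) :
    velocityGradient φ
      = fun p => (InnerProductSpace.toDual ℝ E).symm (fderiv ℝ φ p ∘L .inr ℝ E E) :=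
  funext fun p => ext_inner_right ℝ fun k => by
    rw [inner_velocityGradient (hφ p), InnerProductSpace.toDual_symm_apply]
    rfl

lemma contDiff_velocityGradient (hφ : ContDiff ℝ 2 φ) : ContDiff ℝ 1 (velocityGradient φ) := by
  rw [velocityGradient_eq (hφ.differentiable two_ne_zero)]
  exact (InnerProductSpace.toDual ℝ E).symm.contDiff.comp
    ((hφ.fderiv_right le_rfl).clm_comp contDiff_const)

lemma isPolyBounded_velocityGradient (hφ : Differentiable ℝ φ)
    (hφ' : IsPolyBounded ⊤ id (fderiv ℝ φ)) : IsPolyBounded ⊤ id (velocityGradient φ) := by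
  refine hφ'.of_norm_le fun p => ?_
  rw [velocityGradient_eq hφ, LinearIsometryEquiv.norm_map]
  exact (ContinuousLinearMap.opNorm_comp_le _ _).trans
    (mul_le_of_le_one_right (norm_nonneg _) (ContinuousLinearMap.norm_inr_le_one ℝ E E))

/-- The divergence `∇_ξ·F` of a force field in the velocity variable. -/
noncomputable def velocityDivergence (F : E × E → E) (p : E × E) : ℝ :=
  divergence (fun ξ => F (p.1, ξ)) p.2

/-- The phase-space velocity field `Z` for which the Fokker-Planck equation of `f = exp (-φ)` is the
continuity equation `A ∂_t f + ∇·(Z f) = 0`. -/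
noncomputable def fokkerPlanckField (B τ : ℝ) (φ : E × E → ℝ) (F : E × E → E) : E × E → E × E :=
  transportField B fun p => F p - τ⁻¹ • (p.2 - velocityGradient φ p)

lemma divergence_transportField (hF : DifferentiableAt ℝ F p) :
    divergence (transportField B F) p = velocityDivergence F p := by
  have free : divergence (fun _ : E => B • p.2) p.1 = 0 := by
    rw [divergence, fderiv_const_apply, map_zero]
  exact (divergence_prodMk (by fun_prop) hF).trans (by rw [free, zero_add, velocityDivergence])

lemma continuous_velocityDivergence (hF : ContDiff ℝ 1 F) : Continuous (velocityDivergence F) := by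
  have eq : divergence (transportField 0 F) = velocityDivergence F :=
    funext fun p => divergence_transportField (hF.differentiable one_ne_zero p)
  exact eq ▸ continuous_divergence (contDiff_transportField hF)

lemma contDiff_fokkerPlanckField (hφ : ContDiff ℝ 2 φ) (hF : ContDiff ℝ 1 F) :
    ContDiff ℝ 1 (fokkerPlanckField B τ φ F) :=
  contDiff_transportField
    (hF.sub (contDiff_const.smul (contDiff_snd.sub (contDiff_velocityGradient hφ))))

lemma weightedDivergence_transportField (hF : DifferentiableAt ℝ F p) :
    weightedDivergence φ (transportField B F) p
      = velocityDivergence F p - fderiv ℝ φ p (B • p.2, F p) := by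
  rw [weightedDivergence, divergence_transportField hF, transportField]

lemma fderiv_apply_fokkerPlanckField (hφ : DifferentiableAt ℝ φ p) :
    fderiv ℝ φ p (fokkerPlanckField B τ φ F p) = fderiv ℝ φ p (B • p.2, F p)
      - τ⁻¹ * ⟪velocityGradient φ p, p.2 - velocityGradient φ p⟫ := by
  rw [inner_velocityGradient hφ, ← smul_eq_mul, ← map_smul, ← map_sub, Prod.smul_mk, smul_zero,
    Prod.mk_sub_mk, sub_zero]
  rfl

end Fields

variable [FiniteDimensional ℝ E]

/-- A smooth flow of log-density `r` and velocity `u` at a fixed time, with time derivatives `r'`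
and `u'` and force `R`, of polynomial growth and subject to the mass and momentum balances
`A ∂_t ϱ + B ∇·(ϱ u) = 0` and `A ∂_t (ϱ u) + B ∇·(ϱ u⊗u) + B ∇ϱ = ϱ R` of `ϱ = exp r`, divided
by `ϱ`. -/
structure FlowState (A B : ℝ) (r r' : E → ℝ) (u u' R : E → E) : Prop where
  contDiff_logDensity : ContDiff ℝ 1 r
  contDiff_velocity : ContDiff ℝ 1 u
  continuous_acceleration : Continuous u'
  growth_logDensity : IsPolyBounded ⊤ id r
  growth_fderiv_logDensity : IsPolyBounded ⊤ id (fderiv ℝ r)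
  growth_velocity : IsPolyBounded ⊤ id u
  growth_fderiv_velocity : IsPolyBounded ⊤ id (fderiv ℝ u)
  growth_acceleration : IsPolyBounded ⊤ id u'
  mass (x : E) : A * r' x + B * (divergence u x + fderiv ℝ r x (u x)) = 0
  momentum (x : E) : A • u' x + B • fderiv ℝ u x (u x) + B • gradient r x = R x

variable {A B : ℝ} {φ : E × E → ℝ} {r r' : E → ℝ} {u u' R : E → E}

namespace FlowState

lemma growth_relativeVelocity (m : FlowState A B r r' u u' R) :
    IsPolyBounded ⊤ id fun p : E × E => p.2 - u p.1 :=
  .sub isPolyBounded_snd m.growth_velocity.comp_fst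

lemma growth_logMaxwellianRatio (m : FlowState A B r r' u u' R) (hφ : IsPolyBounded ⊤ id φ)
    (c : ℝ) : IsPolyBounded ⊤ id (logMaxwellianRatio c φ r u) := by
  have := ((hφ.neg.sub m.growth_logDensity.comp_fst).add (.const c)).add
    ((m.growth_relativeVelocity.norm.pow 2).mul (.const 2⁻¹))
  exact this.of_norm_le fun p => (congrArg norm (by rw [logMaxwellianRatio, div_eq_mul_inv])).le

lemma growth_force (m : FlowState A B r r' u u' R) : IsPolyBounded ⊤ id R := by
  have growth_gradient : IsPolyBounded ⊤ id (gradient r) :=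
    m.growth_fderiv_logDensity.of_norm_le fun x => (LinearIsometryEquiv.norm_map _ _).le
  rw [← funext m.momentum]
  exact ((IsPolyBounded.const A).smul m.growth_acceleration).add
    ((IsPolyBounded.const B).smul (m.growth_fderiv_velocity.clm_apply m.growth_velocity)) |>.add
    ((IsPolyBounded.const B).smul growth_gradient)

lemma continuous_force (m : FlowState A B r r' u u' R) : Continuous R := by
  have cont_gradient : Continuous (gradient r) :=
    (InnerProductSpace.toDual ℝ E).symm.continuous.comp
      (m.contDiff_logDensity.continuous_fderiv one_ne_zero)
  have cont_fderiv := m.contDiff_velocity.continuous_fderiv one_ne_zero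
  have cont_u := m.contDiff_velocity.continuous
  have cont_u' := m.continuous_acceleration
  rw [← funext m.momentum]
  fun_prop

end FlowState

variable [MeasurableSpace E]

/-- A phase-space density `exp (-φ)` at a fixed time, with logarithmic time derivative `κ` and force
`F`, of polynomial growth, with finite moments of all orders for the weight `exp (-φ)`, and subject
to the kinetic equation `A ∂_t f + B ξ·∇_x f + ∇_ξ·(F f) = τ⁻¹ ∇_ξ·(∇_ξ f + ξ f)` divided by `f`. -/
structure KineticState (A B τ : ℝ) (μ : Measure E) (φ κ : E × E → ℝ) (F : E × E → E) : Prop where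
  contDiff_potential : ContDiff ℝ 2 φ
  continuous_rate : Continuous κ
  contDiff_force : ContDiff ℝ 1 F
  integrable_weight (N : ℕ) : Integrable (fun p => (1 + ‖p‖) ^ N) (gibbsMeasure (μ.prod μ) φ)
  growth_potential : IsPolyBounded ⊤ id φ
  growth_fderiv_potential : IsPolyBounded ⊤ id (fderiv ℝ φ)
  growth_rate : IsPolyBounded ⊤ id κ
  growth_force : IsPolyBounded ⊤ id F
  growth_velocityDivergence : IsPolyBounded ⊤ id (velocityDivergence F)
  equation (p : E × E) : A * κ p + weightedDivergence φ (fokkerPlanckField B τ φ F) p = 0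

variable {τ L : ℝ} {μ : Measure E} {κ : E × E → ℝ} {F : E × E → E}

theorem entropy_production_identity (k : KineticState A B τ μ φ κ F) (m : FlowState A B r r' u u' R)
    (c : ℝ) (p : E × E) :
    A * (κ p * logMaxwellianRatio c φ r u p + logMaxwellianRatioRate κ r' u u' p)
      = weightedDivergence φ (transportField B F) p
        - weightedDivergence φ
            (fun q => (logMaxwellianRatio c φ r u q + 1) • fokkerPlanckField B τ φ F q) p
        + B * (traceCLM E (fderiv ℝ u p.1) - ⟪p.2 - u p.1, fderiv ℝ u p.1 (p.2 - u p.1)⟫)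
        - τ⁻¹ * ⟪p.2 - velocityGradient φ p, p.2 - velocityGradient φ p - u p.1⟫
        - velocityDivergence F p - ⟪u p.1 - p.2, F p - R p.1⟫ := by
  have hφ : ContDiff ℝ 2 φ := k.contDiff_potential
  have hφp : DifferentiableAt ℝ φ p := hφ.differentiable two_ne_zero p
  have hr : DifferentiableAt ℝ r p.1 := m.contDiff_logDensity.differentiable one_ne_zero p.1
  have hu : DifferentiableAt ℝ u p.1 := m.contDiff_velocity.differentiable one_ne_zero p.1
  have product := weightedDivergence_smul (φ := φ)
    (((contDiff_logMaxwellianRatio (hφ.of_le one_le_two) m.contDiff_logDensity m.contDiff_velocity c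
      ).differentiable one_ne_zero p).add_const 1)
    ((contDiff_fokkerPlanckField (B := B) (τ := τ) hφ k.contDiff_force).differentiable
      one_ne_zero p)
  have chain : fderiv ℝ (logMaxwellianRatio c φ r u) p (fokkerPlanckField B τ φ F p)
      = -fderiv ℝ φ p (fokkerPlanckField B τ φ F p) - B * fderiv ℝ r p.1 p.2
        + ⟪p.2 - u p.1, F p - τ⁻¹ • (p.2 - velocityGradient φ p) - B • fderiv ℝ u p.1 p.2⟫ := by
    rw [fderiv_logMaxwellianRatio c hφp hr hu]
    simp only [fokkerPlanckField, transportField, map_smul, smul_eq_mul]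
  have mass := m.mass p.1
  have equation := k.equation p
  have momentum := congrArg (⟪p.2 - u p.1, ·⟫) (m.momentum p.1)
  simp only [inner_add_right, inner_smul_right, real_inner_comm (gradient r p.1),
    inner_gradient_left] at momentum
  rw [fderiv_add_const, chain, fderiv_apply_fokkerPlanckField hφp] at product
  rw [product, weightedDivergence_transportField (k.contDiff_force.differentiable one_ne_zero p)]
  set n := velocityGradient φ p
  simp only [divergence] at mass
  simp only [map_sub, inner_sub_left] at momentum
  simp only [logMaxwellianRatioRate, map_sub, inner_sub_left, inner_sub_right, inner_smul_right]
  rw [real_inner_comm n p.2, real_inner_comm n (u p.1), real_inner_comm (u p.1) p.2]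
  linear_combination (logMaxwellianRatio c φ r u p + 1) * equation - mass - momentum

namespace KineticState

lemma growth_velocityGradient (k : KineticState A B τ μ φ κ F) :
    IsPolyBounded ⊤ id (velocityGradient φ) :=
  isPolyBounded_velocityGradient (k.contDiff_potential.differentiable two_ne_zero)
    k.growth_fderiv_potential

lemma growth_transportField (k : KineticState A B τ μ φ κ F) :
    IsPolyBounded ⊤ id (transportField B F) :=
  ((IsPolyBounded.const B).smul isPolyBounded_snd).prodMk k.growth_force

lemma growth_fokkerPlanckField (k : KineticState A B τ μ φ κ F) :
    IsPolyBounded ⊤ id (fokkerPlanckField B τ φ F) :=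
  ((IsPolyBounded.const B).smul isPolyBounded_snd).prodMk (k.growth_force.sub
    ((IsPolyBounded.const τ⁻¹).smul (isPolyBounded_snd.sub k.growth_velocityGradient)))

lemma growth_weightedDivergence_transportField (k : KineticState A B τ μ φ κ F) :
    IsPolyBounded ⊤ id (weightedDivergence φ (transportField B F)) := by
  refine (k.growth_velocityDivergence.sub
    (k.growth_fderiv_potential.clm_apply k.growth_transportField)).of_norm_le fun p => ?_
  rw [weightedDivergence, divergence_transportField (k.contDiff_force.differentiable one_ne_zero p)]

lemma growth_weightedDivergence_entropyFlux (k : KineticState A B τ μ φ κ F)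
    (m : FlowState A B r r' u u' R) (c : ℝ) :
    IsPolyBounded ⊤ id (weightedDivergence φ
      fun q => (logMaxwellianRatio c φ r u q + 1) • fokkerPlanckField B τ φ F q) := by
  have hφ : ContDiff ℝ 1 φ := k.contDiff_potential.of_le one_le_two
  have field_eq (p : E × E) : weightedDivergence φ (fokkerPlanckField B τ φ F) p = -(A * κ p) :=
    (neg_eq_of_add_eq_zero_right (k.equation p)).symm
  have product (p : E × E) := weightedDivergence_smul (φ := φ)
    (((contDiff_logMaxwellianRatio hφ m.contDiff_logDensity m.contDiff_velocity c
      ).differentiable one_ne_zero p).add_const 1)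
    ((contDiff_fokkerPlanckField (B := B) (τ := τ) k.contDiff_potential k.contDiff_force
      ).differentiable one_ne_zero p)
  simp only [fderiv_add_const, field_eq, fderiv_logMaxwellianRatio c
    (hφ.differentiable one_ne_zero _) (m.contDiff_logDensity.differentiable one_ne_zero _)
    (m.contDiff_velocity.differentiable one_ne_zero _)] at product
  have growth_Z := k.growth_fokkerPlanckField
  have growth_Z_fst : IsPolyBounded ⊤ id fun p => (fokkerPlanckField B τ φ F p).1 :=
    growth_Z.of_norm_le fun p => norm_fst_le _
  have growth_Z_snd : IsPolyBounded ⊤ id fun p => (fokkerPlanckField B τ φ F p).2 :=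
    growth_Z.of_norm_le fun p => norm_snd_le _
  rw [funext product]
  exact (((k.growth_fderiv_potential.clm_apply growth_Z).neg.sub
    (m.growth_fderiv_logDensity.comp_fst.clm_apply growth_Z_fst)).add
    (m.growth_relativeVelocity.inner (growth_Z_snd.sub
      (m.growth_fderiv_velocity.comp_fst.clm_apply growth_Z_fst)))).add
    (((m.growth_logMaxwellianRatio k.growth_potential c).add (.const 1)).mul
      ((IsPolyBounded.const A).mul k.growth_rate).neg)

end KineticState

end FixedTime

section Production

variable {E : Type*} [NormedAddCommGroup E] [InnerProductSpace ℝ E] [FiniteDimensional ℝ E]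
  [MeasurableSpace E] {A B τ L : ℝ} {μ : Measure E} {φ κ : E × E → ℝ} {F : E × E → E}
  {r r' : E → ℝ} {u u' R : E → E}

local notation "γ" => gibbsMeasure (Measure.prod μ μ) φ

namespace KineticState

lemma isFiniteMeasure (k : KineticState A B τ μ φ κ F) : IsFiniteMeasure γ :=
  (integrable_const_iff_isFiniteMeasure one_ne_zero).1
    (by simpa only [pow_zero] using k.integrable_weight 0)

lemma contDiff_potential_slice (k : KineticState A B τ μ φ κ F) (x : E) :
    ContDiff ℝ 1 fun ξ => φ (x, ξ) :=
  (k.contDiff_potential.of_le one_le_two).comp (contDiff_prodMk_right x)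

variable [BorelSpace E]

lemma integrable (k : KineticState A B τ μ φ κ F) {h : E × E → ℝ} (hc : Continuous h)
    (hg : IsPolyBounded ⊤ id h) : Integrable h γ :=
  hg.integrable hc.aestronglyMeasurable k.integrable_weight

lemma memLp_two (k : KineticState A B τ μ φ κ F) {h : E × E → E} (hc : Continuous h)
    (hg : IsPolyBounded ⊤ id h) : MemLp h 2 γ :=
  hg.memLp_two hc.aestronglyMeasurable k.integrable_weight

lemma memLp_velocity (k : KineticState A B τ μ φ κ F) : MemLp (fun p => p.2) 2 γ :=
  k.memLp_two continuous_snd isPolyBounded_snd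

lemma memLp_velocityGradient (k : KineticState A B τ μ φ κ F) : MemLp (velocityGradient φ) 2 γ :=
  k.memLp_two (contDiff_velocityGradient k.contDiff_potential).continuous k.growth_velocityGradient

lemma memLp_flowVelocity (k : KineticState A B τ μ φ κ F) (m : FlowState A B r r' u u' R) :
    MemLp (fun p => u p.1) 2 γ :=
  k.memLp_two (m.contDiff_velocity.continuous.comp continuous_fst) m.growth_velocity.comp_fst

lemma integrable_strain (k : KineticState A B τ μ φ κ F) (m : FlowState A B r r' u u' R) :
    Integrable (fun p => traceCLM E (fderiv ℝ u p.1)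
      - ⟪p.2 - u p.1, fderiv ℝ u p.1 (p.2 - u p.1)⟫) γ := by
  have growth_trace : IsPolyBounded ⊤ id fun p : E × E => traceCLM E (fderiv ℝ u p.1) :=
    (IsPolyBounded.const (traceCLM E)).clm_apply m.growth_fderiv_velocity.comp_fst
  have cont_u := m.contDiff_velocity.continuous
  have cont_fderiv_u := m.contDiff_velocity.continuous_fderiv one_ne_zero
  exact k.integrable (by fun_prop) (growth_trace.sub (m.growth_relativeVelocity.inner
    (m.growth_fderiv_velocity.comp_fst.clm_apply m.growth_relativeVelocity)))

lemma integrable_dissipation (k : KineticState A B τ μ φ κ F) (m : FlowState A B r r' u u' R) :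
    Integrable (fun p => ⟪p.2 - velocityGradient φ p, p.2 - velocityGradient φ p - u p.1⟫) γ := by
  have flux := k.memLp_velocity.sub k.memLp_velocityGradient
  exact integrable_inner_of_memLp_two flux (flux.sub (k.memLp_flowVelocity m))

lemma integrable_forcing (k : KineticState A B τ μ φ κ F) (m : FlowState A B r r' u u' R) :
    Integrable (fun p => ⟪u p.1 - p.2, F p - R p.1⟫) γ :=
  integrable_inner_of_memLp_two ((k.memLp_flowVelocity m).sub k.memLp_velocity)
    (k.memLp_two (k.contDiff_force.continuous.sub (m.continuous_force.comp continuous_fst))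
      (k.growth_force.sub m.growth_force.comp_fst))

lemma integral_weightedDivergence_eq_zero [μ.IsAddHaarMeasure] (k : KineticState A B τ μ φ κ F)
    {G : E × E → E × E} (hG : ContDiff ℝ 1 G) (growth_G : IsPolyBounded ⊤ id G)
    (growth_div : IsPolyBounded ⊤ id (weightedDivergence φ G)) :
    Integrable (weightedDivergence φ G) γ ∧ ∫ p, weightedDivergence φ G p ∂γ = 0 := by
  have hφ : ContDiff ℝ 1 φ := k.contDiff_potential.of_le one_le_two
  have int_div := k.integrable (continuous_weightedDivergence hφ hG) growth_div
  exact ⟨int_div, _root_.integral_weightedDivergence_eq_zero hφ hG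
    (growth_G.integrable hG.continuous.aestronglyMeasurable k.integrable_weight) int_div⟩

end KineticState

variable [BorelSpace E] [μ.IsAddHaarMeasure]

theorem integral_entropy_production (k : KineticState A B τ μ φ κ F)
    (m : FlowState A B r r' u u' R) (c : ℝ) :
    A * ∫ p, (κ p * logMaxwellianRatio c φ r u p + logMaxwellianRatioRate κ r' u u' p) ∂γ
      = B * (∫ p, (traceCLM E (fderiv ℝ u p.1)
            - ⟪p.2 - u p.1, fderiv ℝ u p.1 (p.2 - u p.1)⟫) ∂γ)
        - τ⁻¹ * ((∫ p, ‖relativeFlux μ φ p‖ ^ 2 ∂γ)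
            + ∫ p, ⟪meanVelocity μ φ p.1, meanVelocity μ φ p.1 - u p.1⟫ ∂γ)
        - (∫ p, velocityDivergence F p ∂γ) - ∫ p, ⟪u p.1 - p.2, F p - R p.1⟫ ∂γ := by
  have := k.isFiniteMeasure
  have hφ : ContDiff ℝ 1 φ := k.contDiff_potential.of_le one_le_two
  have contDiff_g : ContDiff ℝ 1 (logMaxwellianRatio c φ r u) :=
    contDiff_logMaxwellianRatio hφ m.contDiff_logDensity m.contDiff_velocity c
  have growth_g := m.growth_logMaxwellianRatio k.growth_potential c
  obtain ⟨int_transport, transport_eq_zero⟩ := k.integral_weightedDivergence_eq_zero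
    (contDiff_transportField k.contDiff_force) k.growth_transportField
    k.growth_weightedDivergence_transportField
  obtain ⟨int_flux, flux_eq_zero⟩ := k.integral_weightedDivergence_eq_zero
    (G := fun q => (logMaxwellianRatio c φ r u q + 1) • fokkerPlanckField B τ φ F q)
    ((contDiff_g.add contDiff_const).smul
      (contDiff_fokkerPlanckField k.contDiff_potential k.contDiff_force))
    ((growth_g.add (.const 1)).smul k.growth_fokkerPlanckField)
    (k.growth_weightedDivergence_entropyFlux m c)
  have int_strain := (k.integrable_strain m).const_mul B
  have int_diss := (k.integrable_dissipation m).const_mul τ⁻¹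
  have int_div := k.integrable (continuous_velocityDivergence k.contDiff_force)
    k.growth_velocityDivergence
  have int_production := ((int_transport.sub int_flux).add int_strain).sub int_diss
  rw [← integral_dissipation hφ.continuous.measurable k.contDiff_potential_slice k.memLp_velocity
    k.memLp_velocityGradient (k.memLp_flowVelocity m), ← integral_const_mul, ← integral_const_mul,
    ← integral_const_mul, integral_congr_ae (.of_forall (entropy_production_identity k m c))]
  refine (integral_sub' (int_production.sub int_div) (k.integrable_forcing m)).trans ?_
  rw [integral_sub' int_production int_div,
    integral_sub' ((int_transport.sub int_flux).add int_strain) int_diss,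
    integral_add' (int_transport.sub int_flux) int_strain, integral_sub' int_transport int_flux,
    transport_eq_zero, flux_eq_zero, sub_zero, zero_add]

theorem integral_entropy_production_le (hA : 0 < A) (hB : 0 ≤ B) (hτ : 0 < τ)
    (k : KineticState A B τ μ φ κ F) (m : FlowState A B r r' u u' R)
    (hL : ∀ x, ‖fderiv ℝ u x‖ ≤ L) (c : ℝ) :
    (∫ p, (κ p * logMaxwellianRatio c φ r u p + logMaxwellianRatioRate κ r' u u' p) ∂γ)
        + 1 / (2 * τ * A) * ∫ p, ‖relativeFlux μ φ p‖ ^ 2 ∂γ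
      ≤ B / A * L * (∫ p, ‖meanVelocity μ φ p.1 - u p.1‖ ^ 2 ∂γ)
        + B ^ 2 * τ / (2 * A) * L ^ 2 * (∫ p, (1 + ‖p.2‖ ^ 2) ∂γ)
        - 1 / (A * τ) * (∫ p, ⟪meanVelocity μ φ p.1, meanVelocity μ φ p.1 - u p.1⟫ ∂γ)
        - 1 / A * (∫ p, velocityDivergence F p ∂γ)
        - 1 / A * ∫ p, ⟪u p.1 - p.2, F p - R p.1⟫ ∂γ := by
  have := k.isFiniteMeasure
  have production := integral_entropy_production k m c
  have strain_le := mul_integral_strain_le hB hτ k.contDiff_potential.continuous.measurable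
    k.contDiff_potential_slice k.memLp_velocity k.memLp_velocityGradient (k.memLp_flowVelocity m)
    (m.contDiff_velocity.continuous_fderiv one_ne_zero).stronglyMeasurable hL
  have energy := k.memLp_velocity.integrable_norm_pow'
  have energy_le : ∫ p, ‖p.2‖ ^ 2 ∂γ ≤ ∫ p, (1 + ‖p.2‖ ^ 2) ∂γ :=
    integral_mono energy ((integrable_const 1).fun_add energy)
      fun p => le_add_of_nonneg_left zero_le_one
  have energy_term_le := mul_le_mul_of_nonneg_left energy_le
    (by positivity : 0 ≤ B ^ 2 * τ / 2 * L ^ 2)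
  refine le_of_mul_le_mul_left ?_ hA
  calc A * ((∫ p, (κ p * logMaxwellianRatio c φ r u p + logMaxwellianRatioRate κ r' u u' p) ∂γ)
        + 1 / (2 * τ * A) * ∫ p, ‖relativeFlux μ φ p‖ ^ 2 ∂γ)
      = A * (∫ p, (κ p * logMaxwellianRatio c φ r u p + logMaxwellianRatioRate κ r' u u' p) ∂γ)
        + 1 / (2 * τ) * ∫ p, ‖relativeFlux μ φ p‖ ^ 2 ∂γ := by field_simp
    _ ≤ B * L * (∫ p, ‖meanVelocity μ φ p.1 - u p.1‖ ^ 2 ∂γ)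
        + B ^ 2 * τ / 2 * L ^ 2 * (∫ p, (1 + ‖p.2‖ ^ 2) ∂γ)
        - τ⁻¹ * (∫ p, ⟪meanVelocity μ φ p.1, meanVelocity μ φ p.1 - u p.1⟫ ∂γ)
        - (∫ p, velocityDivergence F p ∂γ) - ∫ p, ⟪u p.1 - p.2, F p - R p.1⟫ ∂γ := by
      have half : 1 / (2 * τ) = τ⁻¹ / 2 := by field_simp
      rw [half] at strain_le ⊢
      linarith
    _ = _ := by field_simp

end Production

section Slab

variable {X V : Type*} [NormedAddCommGroup X] [NormedSpace ℝ X] [NormedAddCommGroup V]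
  [NormedSpace ℝ V] {U : ℝ × X → V} {J : Set ℝ} {t : ℝ} {n : WithTop ℕ∞}

lemma contDiffAt_of_contDiffOn_slab (hU : ContDiffOn ℝ n U (J ×ˢ univ)) (hJ : J ∈ 𝓝 t) (x : X) :
    ContDiffAt ℝ n U (t, x) :=
  hU.contDiffAt (prod_mem_nhds hJ univ_mem)

lemma contDiff_slice (hU : ContDiffOn ℝ n U (J ×ˢ univ)) (hJ : J ∈ 𝓝 t) :
    ContDiff ℝ n fun x => U (t, x) :=
  contDiff_iff_contDiffAt.2 fun x =>
    (contDiffAt_of_contDiffOn_slab hU hJ x).comp x (contDiffAt_const.prodMk contDiffAt_id)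

lemma hasDerivAt_slice (hU : ContDiffOn ℝ 1 U (J ×ˢ univ)) (hJ : J ∈ 𝓝 t) (x : X) :
    HasDerivAt (fun s => U (s, x)) (fderiv ℝ U (t, x) (1, 0)) t :=
  ((contDiffAt_of_contDiffOn_slab hU hJ x).differentiableAt one_ne_zero).hasFDerivAt.comp_hasDerivAt
    t ((hasDerivAt_id t).prodMk (hasDerivAt_const t x))

lemma continuous_fderiv_slice (hU : ContDiffOn ℝ 1 U (J ×ˢ univ)) (hJ : J ∈ 𝓝 t) :
    Continuous fun x => fderiv ℝ U (t, x) :=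
  continuous_iff_continuousAt.2 fun x => ContinuousAt.comp (f := fun x => (t, x))
    ((contDiffAt_of_contDiffOn_slab hU hJ x).continuousAt_fderiv one_ne_zero) (by fun_prop)

end Slab

section Domination

variable {X : Type*} [TopologicalSpace X] [MeasurableSpace X] {μ : Measure X} [SFinite μ] {a b : ℝ}

lemma exists_integrable_ge_of_hasDerivAt_le {f f' h : ℝ × X → ℝ}
    (hf : ContinuousOn f (Icc a b ×ˢ univ)) (hh : ContinuousOn h (Icc a b ×ˢ univ))
    (hd : ∀ s ∈ Icc a b, ∀ x, HasDerivAt (fun s => f (s, x)) (f' (s, x)) s)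
    (hle : ∀ s ∈ Icc a b, ∀ x, f' (s, x) ≤ h (s, x)) (h_nonneg : ∀ q, 0 ≤ h q)
    (hfa : Integrable (fun x => f (a, x)) μ)
    (hhi : Integrable h ((volume.restrict (Icc a b)).prod μ)) :
    ∃ G : X → ℝ, Integrable G μ ∧ ∀ s ∈ Icc a b, ∀ x, f (s, x) ≤ G x := by
  have slice_mapsTo (x : X) : MapsTo (fun s => (s, x)) (Icc a b) (Icc a b ×ˢ univ) :=
    fun s hs => ⟨hs, mem_univ x⟩
  refine ⟨fun x => f (a, x) + ∫ s in Icc a b, h (s, x), hfa.add hhi.integral_prod_right,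
    fun s hs x => ?_⟩
  have hsub : Icc a s ⊆ Icc a b := Icc_subset_Icc_right hs.2
  have int_h : IntegrableOn (fun s => h (s, x)) (Icc a b) :=
    (hh.comp (by fun_prop) (slice_mapsTo x)).integrableOn_Icc
  have increment : f (s, x) - f (a, x) ≤ ∫ r in a..s, h (r, x) :=
    intervalIntegral.sub_le_integral_of_hasDeriv_right_of_le hs.1
      ((hf.comp (by fun_prop) (slice_mapsTo x)).mono hsub)
      (fun r hr => (hd r (hsub (Ioo_subset_Icc_self hr)) x).hasDerivWithinAt) (int_h.mono_set hsub)
      fun r hr => hle r (hsub (Ioo_subset_Icc_self hr)) x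
  have extend : ∫ r in a..s, h (r, x) ≤ ∫ r in Icc a b, h (r, x) := by
    rw [intervalIntegral.integral_of_le hs.1]
    exact setIntegral_mono_set int_h (.of_forall fun r => h_nonneg _)
      (Ioc_subset_Icc_self.trans hsub).eventuallyLE
  linarith

end Domination

section TimeDerivative

variable {X : Type*} [NormedAddCommGroup X] [MeasurableSpace X] {μ : Measure X} {J : Set ℝ}
  {ψ g : ℝ × X → ℝ} {a b t : ℝ}

/-- All moments of the measures `exp (-ψ (t, ·)) μ`, for `t ∈ J`, are finite, with a bound that does
not depend on `t`. -/
def HasUniformMoments (μ : Measure X) (J : Set ℝ) (ψ : ℝ × X → ℝ) : Prop :=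
  ∀ N : ℕ, ∃ c : ℝ, ∀ t ∈ J,
    Integrable (fun x => (1 + ‖x‖) ^ N) (gibbsMeasure μ fun x => ψ (t, x)) ∧
      ∫ x, (1 + ‖x‖) ^ N ∂gibbsMeasure μ (fun x => ψ (t, x)) ≤ c

lemma hasUniformMoments_iff (hψ : ∀ t ∈ J, Measurable fun x => ψ (t, x)) :
    HasUniformMoments μ J ψ ↔ ∀ N : ℕ, ∃ c : ℝ, ∀ t ∈ J,
      Integrable (fun x => (1 + ‖x‖) ^ N * exp (-ψ (t, x))) μ ∧
        ∫ x, (1 + ‖x‖) ^ N * exp (-ψ (t, x)) ∂μ ≤ c := by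
  refine forall_congr' fun N => exists_congr fun c => forall₂_congr fun t ht => ?_
  rw [integrable_gibbsMeasure_iff (hψ t ht), integral_gibbsMeasure (hψ t ht)]
  simp only [smul_eq_mul, mul_comm]

variable [BorelSpace X] [SecondCountableTopology X] [SFinite μ]

lemma HasUniformMoments.integrable_prod (hm : HasUniformMoments μ J ψ)
    (hψ : ContinuousOn ψ (J ×ˢ univ)) (hab : Icc a b ⊆ J) (N : ℕ) :
    Integrable (fun q : ℝ × X => (1 + ‖q.2‖) ^ N * exp (-ψ q))
      ((volume.restrict (Icc a b)).prod μ) := by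
  have slice_measurable (t : ℝ) (ht : t ∈ J) : Measurable fun x => ψ (t, x) :=
    (hψ.comp_continuous (by fun_prop) fun x => ⟨ht, mem_univ x⟩).measurable
  obtain ⟨c, hc⟩ := (hasUniformMoments_iff slice_measurable).1 hm N
  have meas : AEStronglyMeasurable (fun q : ℝ × X => (1 + ‖q.2‖) ^ N * exp (-ψ q))
      ((volume.restrict (Icc a b)).prod μ) := by
    rw [← Measure.restrict_univ (μ := μ), Measure.prod_restrict]
    have hψ' := hψ.mono (prod_mono_left hab)
    exact ContinuousOn.aestronglyMeasurable (by fun_prop) (measurableSet_Icc.prod .univ)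
  refine (integrable_prod_iff meas).2 ⟨?_, ?_⟩
  · filter_upwards [ae_restrict_mem measurableSet_Icc] with s hs using (hc s (hab hs)).1
  · refine .mono' (integrable_const c) meas.norm.integral_prod_right' ?_
    filter_upwards [ae_restrict_mem measurableSet_Icc] with s hs
    rw [Real.norm_of_nonneg (by positivity)]
    simpa only [norm_mul, norm_pow, Real.norm_of_nonneg (exp_pos _).le,
      Real.norm_of_nonneg (add_nonneg zero_le_one (norm_nonneg _))] using (hc s (hab hs)).2

variable [NormedSpace ℝ X]

lemma HasUniformMoments.exists_integrable_ge (hm : HasUniformMoments μ J ψ) (hJ : IsOpen J)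
    (hψ : ContDiffOn ℝ 1 ψ (J ×ˢ univ))
    (hψt : IsPolyBounded (𝓟 (J ×ˢ univ)) Prod.snd fun q => fderiv ℝ ψ q (1, 0)) (ht : t ∈ J)
    (N : ℕ) : ∃ G : X → ℝ, Integrable G μ ∧
      ∀ᶠ s in 𝓝 t, ∀ x, (1 + ‖x‖) ^ N * exp (-ψ (s, x)) ≤ G x := by
  obtain ⟨a, b, htab, hab_nhds, hab⟩ := exists_Icc_mem_subset_of_mem_nhds (hJ.mem_nhds ht)
  have slice_measurable (t : ℝ) (ht : t ∈ J) : Measurable fun x => ψ (t, x) :=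
    (contDiff_slice hψ (hJ.mem_nhds ht)).continuous.measurable
  obtain ⟨C, hC, k, hCk⟩ := hψt.exists_norm_le
  have cont := hψ.continuousOn.mono (prod_mono_left hab)
  obtain ⟨c, hc⟩ := (hasUniformMoments_iff slice_measurable).1 hm N
  have rate_le (s : ℝ) (hs : s ∈ Icc a b) (x : X) :
      (1 + ‖x‖) ^ N * (exp (-ψ (s, x)) * -fderiv ℝ ψ (s, x) (1, 0))
        ≤ C * ((1 + ‖x‖) ^ (N + k) * exp (-ψ (s, x))) :=
    calc (1 + ‖x‖) ^ N * (exp (-ψ (s, x)) * -fderiv ℝ ψ (s, x) (1, 0))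
        ≤ (1 + ‖x‖) ^ N * (exp (-ψ (s, x)) * (C * (1 + ‖x‖) ^ k)) := by
          gcongr
          exact (neg_le_abs _).trans (hCk (s, x) ⟨hab hs, mem_univ x⟩)
      _ = C * ((1 + ‖x‖) ^ (N + k) * exp (-ψ (s, x))) := by ring
  obtain ⟨G, hG, hGle⟩ := exists_integrable_ge_of_hasDerivAt_le
    (f := fun q => (1 + ‖q.2‖) ^ N * exp (-ψ q))
    (f' := fun q => (1 + ‖q.2‖) ^ N * (exp (-ψ q) * -fderiv ℝ ψ q (1, 0)))
    (h := fun q => C * ((1 + ‖q.2‖) ^ (N + k) * exp (-ψ q))) (by fun_prop) (by fun_prop)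
    (fun s hs x =>
      (hasDerivAt_slice hψ (hJ.mem_nhds (hab hs)) x).fun_neg.exp.const_mul ((1 + ‖x‖) ^ N))
    rate_le (fun q => by positivity) (hc a (hab ⟨le_rfl, htab.1.trans htab.2⟩)).1
    ((hm.integrable_prod hψ.continuousOn hab (N + k)).const_mul C)
  exact ⟨G, hG, eventually_of_mem hab_nhds hGle⟩

lemma HasUniformMoments.exists_integrable_norm_le (hm : HasUniformMoments μ J ψ) (hJ : IsOpen J)
    (hψ : ContDiffOn ℝ 1 ψ (J ×ˢ univ))
    (hψt : IsPolyBounded (𝓟 (J ×ˢ univ)) Prod.snd fun q => fderiv ℝ ψ q (1, 0))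
    (hg : IsPolyBounded (𝓟 (J ×ˢ univ)) Prod.snd g) (ht : t ∈ J) :
    ∃ G : X → ℝ, Integrable G μ ∧ ∀ᶠ s in 𝓝 t, ∀ x, ‖exp (-ψ (s, x)) * g (s, x)‖ ≤ G x := by
  obtain ⟨c, hc, k, g_le⟩ := hg.exists_norm_le
  obtain ⟨G, hG, weight_le⟩ := hm.exists_integrable_ge hJ hψ hψt ht k
  refine ⟨fun x => c * G x, hG.const_mul c, ?_⟩
  filter_upwards [weight_le, hJ.mem_nhds ht] with s hs hsJ x
  calc ‖exp (-ψ (s, x)) * g (s, x)‖ = exp (-ψ (s, x)) * ‖g (s, x)‖ := by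
        rw [norm_mul, Real.norm_of_nonneg (exp_pos _).le]
    _ ≤ exp (-ψ (s, x)) * (c * (1 + ‖x‖) ^ k) := by
        gcongr
        exact g_le (s, x) ⟨hsJ, mem_univ x⟩
    _ = c * ((1 + ‖x‖) ^ k * exp (-ψ (s, x))) := by ring
    _ ≤ c * G x := by
        gcongr
        exact hs x

theorem hasDerivAt_integral_exp_neg_mul (hJ : IsOpen J) (hm : HasUniformMoments μ J ψ)
    (hψ : ContDiffOn ℝ 1 ψ (J ×ˢ univ)) (hg : ContDiffOn ℝ 1 g (J ×ˢ univ))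
    (hψt : IsPolyBounded (𝓟 (J ×ˢ univ)) Prod.snd fun q => fderiv ℝ ψ q (1, 0))
    (growth_g : IsPolyBounded (𝓟 (J ×ˢ univ)) Prod.snd g)
    (hgt : IsPolyBounded (𝓟 (J ×ˢ univ)) Prod.snd fun q => fderiv ℝ g q (1, 0)) (ht : t ∈ J) :
    HasDerivAt (fun s => ∫ x, exp (-ψ (s, x)) * g (s, x) ∂μ)
      (∫ x, exp (-ψ (t, x)) * (-fderiv ℝ ψ (t, x) (1, 0) * g (t, x) + fderiv ℝ g (t, x) (1, 0)) ∂μ)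
      t := by
  set rate : ℝ × X → ℝ := fun q => -fderiv ℝ ψ q (1, 0) * g q + fderiv ℝ g q (1, 0)
  have ψ_slice {s : ℝ} (hs : s ∈ J) : Continuous fun x => ψ (s, x) :=
    (contDiff_slice hψ (hJ.mem_nhds hs)).continuous
  have g_slice {s : ℝ} (hs : s ∈ J) : Continuous fun x => g (s, x) :=
    (contDiff_slice hg (hJ.mem_nhds hs)).continuous
  have ψ'_slice := continuous_fderiv_slice hψ (hJ.mem_nhds ht)
  have g'_slice := continuous_fderiv_slice hg (hJ.mem_nhds ht)
  have entropy_meas {s : ℝ} (hs : s ∈ J) :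
      AEStronglyMeasurable (fun x => exp (-ψ (s, x)) * g (s, x)) μ :=
    ((ψ_slice hs).neg.rexp.mul (g_slice hs)).aestronglyMeasurable
  have rate_meas : AEStronglyMeasurable (fun x => exp (-ψ (t, x)) * rate (t, x)) μ :=
    ((ψ_slice ht).neg.rexp.mul (((ψ'_slice.clm_apply continuous_const).neg.mul (g_slice ht)).add
      (g'_slice.clm_apply continuous_const))).aestronglyMeasurable
  obtain ⟨G₀, hG₀, entropy_le⟩ := hm.exists_integrable_norm_le hJ hψ hψt growth_g ht
  obtain ⟨G₁, hG₁, rate_le⟩ :=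
    hm.exists_integrable_norm_le hJ hψ hψt ((hψt.neg.mul growth_g).add hgt) ht
  refine (hasDerivAt_integral_of_dominated_loc_of_deriv_le (bound := G₁)
    (F' := fun s x => exp (-ψ (s, x)) * rate (s, x)) (inter_mem (hJ.mem_nhds ht) rate_le)
    (eventually_of_mem (hJ.mem_nhds ht) fun s hs => entropy_meas hs)
    (hG₀.mono' (entropy_meas ht) (.of_forall entropy_le.self_of_nhds)) rate_meas
    (.of_forall fun x s hs => hs.2 x) hG₁ (.of_forall fun x s hs => ?_)).2
  exact ((hasDerivAt_slice hψ (hJ.mem_nhds hs.1) x).fun_neg.exp.mul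
    (hasDerivAt_slice hg (hJ.mem_nhds hs.1) x)).congr_deriv (by simp only [rate]; ring)

end TimeDerivative

section SlabGrowth

variable {X X' V : Type*} [NormedAddCommGroup X] [NormedAddCommGroup X'] [NormedAddCommGroup V]
  {J : Set ℝ}

lemma IsPolyBounded.slice {f : ℝ × X → V} (hf : IsPolyBounded (𝓟 (J ×ˢ univ)) Prod.snd f) {t : ℝ}
    (ht : t ∈ J) : IsPolyBounded ⊤ id fun x => f (t, x) :=
  hf.comp (tendsto_principal.2 (.of_forall fun x => ⟨ht, mem_univ x⟩)) fun _ => le_rfl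

lemma IsPolyBounded.slab_comp_fst {f : ℝ × X → V}
    (hf : IsPolyBounded (𝓟 (J ×ˢ univ)) Prod.snd f) :
    IsPolyBounded (𝓟 (J ×ˢ univ)) Prod.snd fun q : ℝ × X × X' => f (q.1, q.2.1) :=
  hf.comp (tendsto_principal_principal.2 fun _ hq => ⟨hq.1, mem_univ _⟩) fun _ => norm_fst_le _

end SlabGrowth

section EntropyEvolution

variable {E : Type*} [NormedAddCommGroup E] {J : Set ℝ}
  {ψ : ℝ × E × E → ℝ} {r : ℝ × E → ℝ} {u : ℝ × E → E} {t : ℝ}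

/-- `logMaxwellianRatio` along a curve of potentials, log-densities and velocities. -/
noncomputable def timeLogMaxwellianRatio (c : ℝ) (ψ : ℝ × E × E → ℝ) (r : ℝ × E → ℝ)
    (u : ℝ × E → E) (q : ℝ × E × E) : ℝ :=
  logMaxwellianRatio c (fun p => ψ (q.1, p)) (fun x => r (q.1, x)) (fun x => u (q.1, x)) q.2

lemma isPolyBounded_slab_velocity :
    IsPolyBounded (𝓟 (J ×ˢ univ)) Prod.snd fun q : ℝ × E × E => q.2.2 :=
  IsPolyBounded.weight.of_norm_le fun q => norm_snd_le q.2

lemma growth_timeLogMaxwellianRatio (hψ : IsPolyBounded (𝓟 (J ×ˢ univ)) Prod.snd ψ)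
    (hr : IsPolyBounded (𝓟 (J ×ˢ univ)) Prod.snd r)
    (hu : IsPolyBounded (𝓟 (J ×ˢ univ)) Prod.snd u) (c : ℝ) :
    IsPolyBounded (𝓟 (J ×ˢ univ)) Prod.snd (timeLogMaxwellianRatio c ψ r u) := by
  have := ((hψ.neg.sub hr.slab_comp_fst).add (.const c)).add
    (((isPolyBounded_slab_velocity.sub hu.slab_comp_fst).norm.pow 2).mul (.const 2⁻¹))
  exact this.of_norm_le fun q => le_rfl

variable [InnerProductSpace ℝ E]

lemma contDiffOn_timeLogMaxwellianRatio (hψ : ContDiffOn ℝ 1 ψ (J ×ˢ univ))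
    (hr : ContDiffOn ℝ 1 r (J ×ˢ univ)) (hu : ContDiffOn ℝ 1 u (J ×ˢ univ)) (c : ℝ) :
    ContDiffOn ℝ 1 (timeLogMaxwellianRatio c ψ r u) (J ×ˢ univ) := by
  have proj : ContDiffOn ℝ 1 (fun q : ℝ × E × E => (q.1, q.2.1)) (J ×ˢ univ) := by fun_prop
  have mapsTo : MapsTo (fun q : ℝ × E × E => (q.1, q.2.1)) (J ×ˢ univ) (J ×ˢ univ) :=
    fun q hq => ⟨hq.1, mem_univ _⟩
  exact ((hψ.neg.sub (hr.comp proj mapsTo)).add contDiffOn_const).add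
    (((contDiff_snd.snd.contDiffOn.sub (hu.comp proj mapsTo)).norm_sq ℝ).div_const 2)

lemma fderiv_timeLogMaxwellianRatio (hψ : ContDiffOn ℝ 1 ψ (J ×ˢ univ))
    (hr : ContDiffOn ℝ 1 r (J ×ˢ univ)) (hu : ContDiffOn ℝ 1 u (J ×ˢ univ)) (hJ : J ∈ 𝓝 t) (c : ℝ)
    (p : E × E) :
    fderiv ℝ (timeLogMaxwellianRatio c ψ r u) (t, p) (1, 0)
      = logMaxwellianRatioRate (fun p => -fderiv ℝ ψ (t, p) (1, 0))
          (fun x => fderiv ℝ r (t, x) (1, 0)) (fun x => u (t, x))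
          (fun x => fderiv ℝ u (t, x) (1, 0)) p := by
  have slice := hasDerivAt_slice (contDiffOn_timeLogMaxwellianRatio hψ hr hu c) hJ p
  have computed : HasDerivAt (fun s => timeLogMaxwellianRatio c ψ r u (s, p)) _ t :=
    (((hasDerivAt_slice hψ hJ p).neg.sub (hasDerivAt_slice hr hJ p.1)).add_const c).add
      (((hasDerivAt_slice hu hJ p.1).const_sub p.2).norm_sq.div_const 2)
  rw [slice.unique computed, logMaxwellianRatioRate, inner_neg_right]
  ring

theorem hasDerivAt_integral_logMaxwellianRatio [FiniteDimensional ℝ E] [MeasurableSpace E]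
    [BorelSpace E] {ν : Measure (E × E)} [SFinite ν] (hJ : IsOpen J) (hm : HasUniformMoments ν J ψ)
    (hψ : ContDiffOn ℝ 1 ψ (J ×ˢ univ)) (hr : ContDiffOn ℝ 1 r (J ×ˢ univ))
    (hu : ContDiffOn ℝ 1 u (J ×ˢ univ)) (growth_ψ : IsPolyBounded (𝓟 (J ×ˢ univ)) Prod.snd ψ)
    (growth_ψ' : IsPolyBounded (𝓟 (J ×ˢ univ)) Prod.snd fun q => fderiv ℝ ψ q (1, 0))
    (growth_r : IsPolyBounded (𝓟 (J ×ˢ univ)) Prod.snd r)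
    (growth_r' : IsPolyBounded (𝓟 (J ×ˢ univ)) Prod.snd fun q => fderiv ℝ r q (1, 0))
    (growth_u : IsPolyBounded (𝓟 (J ×ˢ univ)) Prod.snd u)
    (growth_u' : IsPolyBounded (𝓟 (J ×ˢ univ)) Prod.snd fun q => fderiv ℝ u q (1, 0)) (c : ℝ)
    (ht : t ∈ J) :
    HasDerivAt (fun s => ∫ p, exp (-ψ (s, p)) * logMaxwellianRatio c (fun p => ψ (s, p))
        (fun x => r (s, x)) (fun x => u (s, x)) p ∂ν)
      (∫ p, (-fderiv ℝ ψ (t, p) (1, 0) * logMaxwellianRatio c (fun p => ψ (t, p))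
          (fun x => r (t, x)) (fun x => u (t, x)) p
        + logMaxwellianRatioRate (fun p => -fderiv ℝ ψ (t, p) (1, 0))
          (fun x => fderiv ℝ r (t, x) (1, 0)) (fun x => u (t, x))
          (fun x => fderiv ℝ u (t, x) (1, 0)) p) ∂gibbsMeasure ν fun p => ψ (t, p)) t := by
  have growth_rate : IsPolyBounded (𝓟 (J ×ˢ univ)) Prod.snd
      fun q => fderiv ℝ (timeLogMaxwellianRatio c ψ r u) q (1, 0) := by
    refine IsPolyBounded.of_isBigO ((growth_ψ'.neg.sub growth_r'.slab_comp_fst).sub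
      ((isPolyBounded_slab_velocity.sub growth_u.slab_comp_fst).inner growth_u'.slab_comp_fst))
      (EventuallyEq.isBigO (eventually_principal.2 fun q hq => ?_))
    exact fderiv_timeLogMaxwellianRatio hψ hr hu (hJ.mem_nhds hq.1) c q.2
  have deriv_entropy := hasDerivAt_integral_exp_neg_mul hJ hm hψ
    (contDiffOn_timeLogMaxwellianRatio hψ hr hu c) growth_ψ'
    (growth_timeLogMaxwellianRatio growth_ψ growth_r growth_u c) growth_rate ht
  rw [integral_gibbsMeasure (contDiff_slice hψ (hJ.mem_nhds ht)).continuous.measurable]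
  simp only [fderiv_timeLogMaxwellianRatio hψ hr hu (hJ.mem_nhds ht)] at deriv_entropy
  exact deriv_entropy

end EntropyEvolution

section Density

variable {E : Type*} [NormedAddCommGroup E] [InnerProductSpace ℝ E]

lemma gradient_exp_neg [CompleteSpace E] {φ : E → ℝ} {x : E} (hφ : DifferentiableAt ℝ φ x) :
    gradient (fun y => exp (-φ y)) x = -(exp (-φ x) • gradient φ x) := by
  rw [gradient, fderiv_exp hφ.fun_neg, fderiv_fun_neg, smul_neg, map_neg, map_smul, gradient]

variable [FiniteDimensional ℝ E] {φ : E × E → ℝ} {F : E × E → E} {B τ : ℝ}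

lemma exp_neg_mul_weightedDivergence_fokkerPlanckField (hφ : ContDiff ℝ 2 φ)
    (hF : ContDiff ℝ 1 F) (p : E × E) :
    exp (-φ p) * weightedDivergence φ (fokkerPlanckField B τ φ F) p
      = B * ⟪p.2, gradient (fun y => exp (-φ (y, p.2))) p.1⟫
        + divergence (fun ζ => exp (-φ (p.1, ζ)) • F (p.1, ζ)) p.2
        - τ⁻¹ * divergence (fun ζ => gradient (fun ζ' => exp (-φ (p.1, ζ'))) ζ
            + exp (-φ (p.1, ζ)) • ζ) p.2 := by
  have diff_φ : Differentiable ℝ φ := hφ.differentiable two_ne_zero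
  have diff_F : Differentiable ℝ F := hF.differentiable one_ne_zero
  have diff_n := (contDiff_velocityGradient hφ).differentiable one_ne_zero
  have flux_eq (ζ : E) : gradient (fun ζ' => exp (-φ (p.1, ζ'))) ζ + exp (-φ (p.1, ζ)) • ζ
      = exp (-φ (p.1, ζ)) • (ζ - velocityGradient φ (p.1, ζ)) := by
    rw [gradient_exp_neg (by fun_prop), smul_sub, neg_add_eq_sub, velocityGradient]
  have transport : divergence (fun x => exp (-φ (x, p.2)) • B • p.2) p.1
      = B * ⟪p.2, gradient (fun y => exp (-φ (y, p.2))) p.1⟫ := by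
    rw [divergence_smul (by fun_prop) (by fun_prop), divergence, fderiv_const_apply, map_zero,
      mul_zero, add_zero, map_smul, smul_eq_mul, real_inner_comm, inner_gradient_left]
  have velocity : divergence (fun ζ => exp (-φ (p.1, ζ)) •
        (F (p.1, ζ) - τ⁻¹ • (ζ - velocityGradient φ (p.1, ζ)))) p.2
      = divergence (fun ζ => exp (-φ (p.1, ζ)) • F (p.1, ζ)) p.2
        - τ⁻¹ * divergence
            (fun ζ => exp (-φ (p.1, ζ)) • (ζ - velocityGradient φ (p.1, ζ))) p.2 := by
    simp only [smul_sub (exp _) (F _), smul_comm (exp _) τ⁻¹]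
    rw [divergence, fderiv_fun_sub (by fun_prop) (by fun_prop), fderiv_fun_const_smul (by fun_prop),
      map_sub, map_smul, smul_eq_mul, divergence, divergence]
  simp only [flux_eq]
  rw [← divergence_exp_neg_smul (diff_φ p)
    ((contDiff_fokkerPlanckField hφ hF).differentiable one_ne_zero p), add_sub_assoc, ← velocity,
    ← transport]
  exact divergence_prodMk (P := fun q => exp (-φ q) • B • q.2)
    (Q := fun q => exp (-φ q) • (F q - τ⁻¹ • (q.2 - velocityGradient φ q))) (by fun_prop)
    (by fun_prop)

variable [MeasurableSpace E] [BorelSpace E] {μ ν : Measure E}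

lemma integral_norm_relativeFlux_sq (hφ : Differentiable ℝ φ) :
    ∫ p, ‖relativeFlux ν φ p‖ ^ 2 ∂gibbsMeasure (μ.prod ν) φ
      = ∫ p, (exp (-φ p))⁻¹ * ‖gradient (fun ζ => exp (-φ (p.1, ζ))) p.2
          + exp (-φ p) • (p.2 - meanVelocity ν φ p.1)‖ ^ 2 ∂μ.prod ν := by
  rw [integral_gibbsMeasure hφ.continuous.measurable]
  refine integral_congr_ae (.of_forall fun p => ?_)
  have flux_eq : gradient (fun ζ => exp (-φ (p.1, ζ))) p.2
      + exp (-φ p) • (p.2 - meanVelocity ν φ p.1) = exp (-φ p) • relativeFlux ν φ p := by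
    rw [gradient_exp_neg (by fun_prop), relativeFlux, velocityGradient]
    module
  simp only [flux_eq, norm_smul, Real.norm_of_nonneg (exp_pos _).le, smul_eq_mul]
  field_simp

end Density

section Conservation

variable {E : Type*} [NormedAddCommGroup E] [InnerProductSpace ℝ E] {ρ a : E → ℝ} {u : E → E}
  {x : E}

lemma gradient_eq_smul_gradient_log [CompleteSpace E] (hρ : DifferentiableAt ℝ ρ x)
    (hρx : ρ x ≠ 0) : gradient ρ x = ρ x • gradient (fun y => log (ρ y)) x := by
  rw [gradient, gradient, fderiv.log hρ hρx, map_smul, smul_inv_smul₀ hρx]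

variable [FiniteDimensional ℝ E]

lemma divergence_smul_eq_mul_log (hρ : DifferentiableAt ℝ ρ x) (hρx : ρ x ≠ 0)
    (hu : DifferentiableAt ℝ u x) :
    divergence (fun y => ρ y • u y) x
      = ρ x * (divergence u x + fderiv ℝ (fun y => log (ρ y)) x (u x)) := by
  rw [divergence_smul hρ hu, fderiv.log hρ hρx, smul_apply, smul_eq_mul, mul_add,
    mul_inv_cancel_left₀ hρx, add_comm]

lemma divergence_mul_smul (hρ : DifferentiableAt ℝ ρ x) (ha : DifferentiableAt ℝ a x)
    (hu : DifferentiableAt ℝ u x) :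
    divergence (fun y => (ρ y * a y) • u y) x
      = ρ x * fderiv ℝ a x (u x) + a x * divergence (fun y => ρ y • u y) x := by
  simp only [mul_comm (ρ _), mul_smul]
  rw [divergence_smul ha (hρ.fun_smul hu), map_smul, smul_eq_mul]
  ring

end Conservation

section Euclidean

local notation "𝔼" d:max => EuclideanSpace ℝ (Fin d)

variable {d : ℕ}

lemma ediv_eq_divergence (G : 𝔼 d → 𝔼 d) : ediv G = divergence G := by
  ext ξ
  simp only [ediv, divergence,
    traceCLM_eq_sum_coord (EuclideanSpace.basisFun (Fin d) ℝ).toBasis, OrthonormalBasis.coe_toBasis,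
    EuclideanSpace.basisFun_apply, Module.Basis.coord_apply,
    OrthonormalBasis.coe_toBasis_repr_apply, EuclideanSpace.basisFun_repr]

lemma log_exp_neg_div_maxwellian (a : ℝ) {ρ : ℝ} (hρ : 0 < ρ) (u ξ : 𝔼 d) :
    log (exp (-a) / maxwellian d ρ u ξ)
      = -a - log ρ + d / 2 * log (2 * π) + ‖ξ - u‖ ^ 2 / 2 := by
  have two_pi_pos : 0 < 2 * π := by positivity
  have normalization_ne : (2 * π) ^ (-(d : ℝ) / 2) ≠ 0 := (rpow_pos_of_pos two_pi_pos _).ne'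
  rw [maxwellian, log_div (exp_pos _).ne' (by positivity), log_mul (by positivity) (exp_pos _).ne',
    log_mul hρ.ne' normalization_ne, log_exp, log_exp, log_rpow two_pi_pos]
  ring

/-- A density `f = exp (-ψ)` on `(0, T) × ℝ^d × ℝ^d` solving the kinetic equation with force `F`,
whose potential has derivatives of polynomial growth in phase space, uniformly in time, and whose
moments are bounded uniformly in time. -/
structure TemperateKineticSolution (A B τ T : ℝ) (ψ : ℝ × 𝔼 d × 𝔼 d → ℝ) (F : ℝ × 𝔼 d × 𝔼 d → 𝔼 d) :
    Prop where
  contDiffOn_potential : ContDiffOn ℝ 2 ψ (Ioo 0 T ×ˢ univ)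
  growth_fderiv_potential : IsPolyBounded (𝓟 (Ioo 0 T ×ˢ univ)) Prod.snd (fderiv ℝ ψ)
  uniform_moments : HasUniformMoments volume (Ioo 0 T) ψ
  contDiff_force {t : ℝ} (ht : t ∈ Ioo 0 T) : ContDiff ℝ 1 fun p => F (t, p)
  growth_force {t : ℝ} (ht : t ∈ Ioo 0 T) : IsPolyBounded ⊤ id fun p => F (t, p)
  growth_ediv_force {t : ℝ} (ht : t ∈ Ioo 0 T) :
    IsPolyBounded ⊤ id fun p : 𝔼 d × 𝔼 d => ediv (fun ζ => F (t, p.1, ζ)) p.2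
  equation {t : ℝ} (ht : t ∈ Ioo 0 T) (x ξ : 𝔼 d) :
    A * deriv (fun s => exp (-ψ (s, x, ξ))) t
        + B * ⟪ξ, gradient (fun y => exp (-ψ (t, y, ξ))) x⟫
        + ediv (fun ζ => exp (-ψ (t, x, ζ)) • F (t, x, ζ)) ξ
      = (1 / τ) * ediv
          (fun ζ => gradient (fun ζ' => exp (-ψ (t, x, ζ'))) ζ + exp (-ψ (t, x, ζ)) • ζ) ξ

/-- A positive density `ρ` and a velocity `u` on `(0, T) × ℝ^d` solving the mass and momentum
balances with force `R`, of polynomial growth in space, uniformly in time. -/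
structure TemperateMacroSolution (A B T : ℝ) (ρ : ℝ → 𝔼 d → ℝ) (u R : ℝ → 𝔼 d → 𝔼 d) : Prop where
  contDiffOn_density : ContDiffOn ℝ 1 (fun q : ℝ × 𝔼 d => ρ q.1 q.2) (Ioo 0 T ×ˢ univ)
  contDiffOn_velocity : ContDiffOn ℝ 1 (fun q : ℝ × 𝔼 d => u q.1 q.2) (Ioo 0 T ×ˢ univ)
  density_pos {t : ℝ} (ht : t ∈ Ioo 0 T) (x : 𝔼 d) : 0 < ρ t x
  growth_logDensity :
    IsPolyBounded (𝓟 (Ioo 0 T ×ˢ univ)) Prod.snd fun q : ℝ × 𝔼 d => log (ρ q.1 q.2)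
  growth_gradient_logDensity : IsPolyBounded (𝓟 (Ioo 0 T ×ˢ univ)) Prod.snd
    fun q : ℝ × 𝔼 d => gradient (fun y => log (ρ q.1 y)) q.2
  growth_velocity : IsPolyBounded (𝓟 (Ioo 0 T ×ˢ univ)) Prod.snd fun q : ℝ × 𝔼 d => u q.1 q.2
  growth_fderiv_velocity :
    IsPolyBounded (𝓟 (Ioo 0 T ×ˢ univ)) Prod.snd fun q : ℝ × 𝔼 d => fderiv ℝ (u q.1) q.2
  growth_acceleration :
    IsPolyBounded (𝓟 (Ioo 0 T ×ˢ univ)) Prod.snd fun q : ℝ × 𝔼 d => deriv (fun s => u s q.2) q.1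
  mass {t : ℝ} (ht : t ∈ Ioo 0 T) (x : 𝔼 d) :
    A * deriv (fun s => ρ s x) t + B * ediv (fun y => ρ t y • u t y) x = 0
  momentum {t : ℝ} (ht : t ∈ Ioo 0 T) (x : 𝔼 d) (i : Fin d) :
    A * deriv (fun s => ρ s x * u s x i) t + B * ediv (fun y => (ρ t y * u t y i) • u t y) x
      + B * gradient (ρ t) x i = ρ t x * R t x i

variable {A B τ T t : ℝ} {ψ : ℝ × 𝔼 d × 𝔼 d → ℝ} {F : ℝ × 𝔼 d × 𝔼 d → 𝔼 d}
  {ρ : ℝ → 𝔼 d → ℝ} {u R : ℝ → 𝔼 d → 𝔼 d}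

namespace TemperateKineticSolution

lemma growth_potential (k : TemperateKineticSolution A B τ T ψ F) :
    IsPolyBounded (𝓟 (Ioo 0 T ×ˢ univ)) Prod.snd ψ :=
  isPolyBounded_of_fderiv (k.contDiffOn_potential.differentiableOn two_ne_zero)
    k.growth_fderiv_potential

lemma growth_timeDeriv_potential (k : TemperateKineticSolution A B τ T ψ F) :
    IsPolyBounded (𝓟 (Ioo 0 T ×ˢ univ)) Prod.snd fun q => fderiv ℝ ψ q (1, 0) :=
  k.growth_fderiv_potential.clm_apply (.const _)

lemma kineticState (k : TemperateKineticSolution A B τ T ψ F) (ht : t ∈ Ioo 0 T) :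
    KineticState A B τ volume (fun p => ψ (t, p)) (fun p => -fderiv ℝ ψ (t, p) (1, 0))
      fun p => F (t, p) := by
  have nhds : Ioo 0 T ∈ 𝓝 t := isOpen_Ioo.mem_nhds ht
  have hψ : ContDiffOn ℝ 1 ψ (Ioo 0 T ×ˢ univ) := k.contDiffOn_potential.of_le one_le_two
  have hφ : ContDiff ℝ 2 fun p => ψ (t, p) := contDiff_slice k.contDiffOn_potential nhds
  have slice (p : 𝔼 d × 𝔼 d) :
      fderiv ℝ (fun p => ψ (t, p)) p = fderiv ℝ ψ (t, p) ∘L .inr ℝ ℝ (𝔼 d × 𝔼 d) :=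
    (((contDiffAt_of_contDiffOn_slab hψ nhds p).differentiableAt one_ne_zero).hasFDerivAt.comp p
      (hasFDerivAt_prodMk_right t p)).fderiv
  refine ⟨hφ, ((continuous_fderiv_slice hψ nhds).clm_apply continuous_const).neg,
    k.contDiff_force ht, fun N => ((k.uniform_moments N).choose_spec t ht).1,
    k.growth_potential.slice ht, ?_, k.growth_timeDeriv_potential.neg.slice ht, k.growth_force ht,
    ?_, fun p => ?_⟩
  · simp only [funext slice]
    refine (k.growth_fderiv_potential.slice ht).of_norm_le fun p => ?_
    exact (ContinuousLinearMap.opNorm_comp_le _ _).trans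
      (mul_le_of_le_one_right (norm_nonneg _) (ContinuousLinearMap.norm_inr_le_one ℝ ℝ (𝔼 d × 𝔼 d)))
  · exact (k.growth_ediv_force ht).of_norm_le fun p => by
      rw [ediv_eq_divergence, velocityDivergence]
  · have equation := k.equation ht p.1 p.2
    rw [(hasDerivAt_slice hψ nhds p).fun_neg.exp.deriv, ediv_eq_divergence, ediv_eq_divergence,
      one_div] at equation
    refine (mul_eq_zero.1 (?_ : exp (-ψ (t, p)) * _ = 0)).resolve_left (exp_pos _).ne'
    rw [mul_add, exp_neg_mul_weightedDivergence_fokkerPlanckField hφ (k.contDiff_force ht)]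
    linear_combination equation

end TemperateKineticSolution

namespace TemperateMacroSolution

lemma contDiffOn_logDensity (m : TemperateMacroSolution A B T ρ u R) :
    ContDiffOn ℝ 1 (fun q : ℝ × 𝔼 d => log (ρ q.1 q.2)) (Ioo 0 T ×ˢ univ) :=
  m.contDiffOn_density.log fun q hq => (m.density_pos hq.1 q.2).ne'

lemma hasDerivAt_density (m : TemperateMacroSolution A B T ρ u R) (ht : t ∈ Ioo 0 T) (x : 𝔼 d) :
    HasDerivAt (fun s => ρ s x)
      (ρ t x * fderiv ℝ (fun q : ℝ × 𝔼 d => log (ρ q.1 q.2)) (t, x) (1, 0)) t := by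
  have nhds : Ioo 0 T ∈ 𝓝 t := isOpen_Ioo.mem_nhds ht
  have deriv_ρ := hasDerivAt_slice m.contDiffOn_density nhds x
  have ne := (m.density_pos ht x).ne'
  rw [(hasDerivAt_slice m.contDiffOn_logDensity nhds x).unique (deriv_ρ.log ne),
    mul_div_cancel₀ _ ne]
  exact deriv_ρ

lemma mass_log (m : TemperateMacroSolution A B T ρ u R) (ht : t ∈ Ioo 0 T) (x : 𝔼 d) :
    A * fderiv ℝ (fun q : ℝ × 𝔼 d => log (ρ q.1 q.2)) (t, x) (1, 0)
      + B * (divergence (u t) x + fderiv ℝ (fun y => log (ρ t y)) x (u t x)) = 0 := by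
  have nhds : Ioo 0 T ∈ 𝓝 t := isOpen_Ioo.mem_nhds ht
  have ne := (m.density_pos ht x).ne'
  have mass := m.mass ht x
  rw [(m.hasDerivAt_density ht x).deriv, ediv_eq_divergence, divergence_smul_eq_mul_log
    ((contDiff_slice m.contDiffOn_density nhds).differentiable one_ne_zero x) ne
    ((contDiff_slice m.contDiffOn_velocity nhds).differentiable one_ne_zero x)] at mass
  exact (mul_eq_zero.1 ((by ring : ρ t x * _ = _).trans mass)).resolve_left ne

lemma momentum_log (m : TemperateMacroSolution A B T ρ u R) (ht : t ∈ Ioo 0 T) (x : 𝔼 d) :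
    A • fderiv ℝ (fun q : ℝ × 𝔼 d => u q.1 q.2) (t, x) (1, 0) + B • fderiv ℝ (u t) x (u t x)
      + B • gradient (fun y => log (ρ t y)) x = R t x := by
  have nhds : Ioo 0 T ∈ 𝓝 t := isOpen_Ioo.mem_nhds ht
  have diff_ρ := (contDiff_slice m.contDiffOn_density nhds).differentiable one_ne_zero x
  have diff_u := (contDiff_slice m.contDiffOn_velocity nhds).differentiable one_ne_zero x
  have ne := (m.density_pos ht x).ne'
  have deriv_u := hasDerivAt_slice m.contDiffOn_velocity nhds x
  ext i
  have deriv_ui : HasDerivAt (fun s => u s x i) _ t :=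
    (EuclideanSpace.proj (𝕜 := ℝ) i : 𝔼 d →L[ℝ] ℝ).hasFDerivAt.comp_hasDerivAt t deriv_u
  have fderiv_ui : HasFDerivAt (fun y => u t y i) _ x :=
    (EuclideanSpace.proj (𝕜 := ℝ) i : 𝔼 d →L[ℝ] ℝ).hasFDerivAt.comp x diff_u.hasFDerivAt
  have mass := m.mass ht x
  have momentum := m.momentum ht x i
  rw [((m.hasDerivAt_density ht x).fun_mul deriv_ui).deriv, ediv_eq_divergence,
    divergence_mul_smul diff_ρ fderiv_ui.differentiableAt diff_u, fderiv_ui.fderiv,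
    gradient_eq_smul_gradient_log diff_ρ ne] at momentum
  rw [(m.hasDerivAt_density ht x).deriv, ediv_eq_divergence] at mass
  refine mul_left_cancel₀ ne ?_
  simp only [PiLp.proj_apply, ContinuousLinearMap.comp_apply, PiLp.smul_apply, smul_eq_mul,
    PiLp.add_apply] at momentum ⊢
  linear_combination momentum - u t x i * mass

lemma growth_timeDeriv_logDensity (m : TemperateMacroSolution A B T ρ u R) (hA : A ≠ 0) :
    IsPolyBounded (𝓟 (Ioo 0 T ×ˢ univ)) Prod.snd
      fun q => fderiv ℝ (fun q : ℝ × 𝔼 d => log (ρ q.1 q.2)) q (1, 0) := by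
  have growth_divergence :=
    (IsPolyBounded.const (traceCLM (𝔼 d))).clm_apply m.growth_fderiv_velocity
  refine .of_isBigO ((IsPolyBounded.const (-(A⁻¹ * B))).mul
    (growth_divergence.add (m.growth_gradient_logDensity.inner m.growth_velocity)))
    (EventuallyEq.isBigO (eventually_principal.2 fun q hq => ?_))
  have mass := m.mass_log hq.1 q.2
  rw [← inner_gradient_left, divergence] at mass
  field_simp
  linear_combination mass

lemma growth_timeDeriv_velocity (m : TemperateMacroSolution A B T ρ u R) :
    IsPolyBounded (𝓟 (Ioo 0 T ×ˢ univ)) Prod.snd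
      fun q => fderiv ℝ (fun q : ℝ × 𝔼 d => u q.1 q.2) q (1, 0) :=
  m.growth_acceleration.of_isBigO (EventuallyEq.isBigO (eventually_principal.2 fun q hq =>
    (hasDerivAt_slice m.contDiffOn_velocity (isOpen_Ioo.mem_nhds hq.1) q.2).deriv.symm))

lemma flowState (m : TemperateMacroSolution A B T ρ u R) (ht : t ∈ Ioo 0 T) :
    FlowState A B (fun x => log (ρ t x))
      (fun x => fderiv ℝ (fun q : ℝ × 𝔼 d => log (ρ q.1 q.2)) (t, x) (1, 0)) (u t)
      (fun x => fderiv ℝ (fun q : ℝ × 𝔼 d => u q.1 q.2) (t, x) (1, 0)) (R t) where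
  contDiff_logDensity := contDiff_slice m.contDiffOn_logDensity (isOpen_Ioo.mem_nhds ht)
  contDiff_velocity := contDiff_slice m.contDiffOn_velocity (isOpen_Ioo.mem_nhds ht)
  continuous_acceleration :=
    (continuous_fderiv_slice m.contDiffOn_velocity (isOpen_Ioo.mem_nhds ht)).clm_apply
      continuous_const
  growth_logDensity := m.growth_logDensity.slice ht
  growth_fderiv_logDensity := (m.growth_gradient_logDensity.slice ht).of_norm_le
    fun _ => (LinearIsometryEquiv.norm_map _ _).ge
  growth_velocity := m.growth_velocity.slice ht
  growth_fderiv_velocity := m.growth_fderiv_velocity.slice ht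
  growth_acceleration := m.growth_timeDeriv_velocity.slice ht
  mass := m.mass_log ht
  momentum := m.momentum_log ht

end TemperateMacroSolution

end Euclidean

section Growth

lemma IsPolyBounded.of_norm_le_one_add_add_pow {X Y V : Type*} [NormedAddCommGroup X]
    [NormedAddCommGroup Y] [NormedAddCommGroup V] {J : Set ℝ} {h : ℝ × X × Y → V} {c : ℝ} {k : ℕ}
    (hle : ∀ t ∈ J, ∀ x y, ‖h (t, x, y)‖ ≤ c * (1 + ‖x‖ + ‖y‖) ^ k) :
    IsPolyBounded (𝓟 (J ×ˢ univ)) Prod.snd h := by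
  have weight : IsPolyBounded (𝓟 (J ×ˢ univ)) Prod.snd (Prod.snd : ℝ × X × Y → X × Y) := .weight
  refine .of_isBigO ((IsPolyBounded.const c).mul ((((IsPolyBounded.const (1 : ℝ)).add
    (weight.of_norm_le fun q => norm_fst_le q.2).norm).add
    (weight.of_norm_le fun q => norm_snd_le q.2).norm).pow k))
    (.of_norm_eventuallyLE (eventually_principal.2 fun q hq => ?_))
  exact hle q.1 hq.1 q.2.1 q.2.2

lemma hasUniformMoments_of_one_add_add {X : Type*} [NormedAddCommGroup X] [MeasurableSpace X]
    [BorelSpace X] [SecondCountableTopology X] {μ : Measure (X × X)} {J : Set ℝ}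
    {ψ : ℝ × X × X → ℝ} (hψ : ∀ t ∈ J, Measurable fun p => ψ (t, p))
    (hm : ∀ N : ℕ, ∃ c : ℝ, ∀ t ∈ J,
      Integrable (fun p : X × X => (1 + ‖p.1‖ + ‖p.2‖) ^ N * exp (-ψ (t, p))) μ ∧
        ∫ p : X × X, (1 + ‖p.1‖ + ‖p.2‖) ^ N * exp (-ψ (t, p)) ∂μ ≤ c) :
    HasUniformMoments μ J ψ := by
  refine (hasUniformMoments_iff hψ).2 fun N => (hm N).imp fun c hc t ht => ?_
  have weight_le (p : X × X) : (1 + ‖p‖) ^ N * exp (-ψ (t, p))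
      ≤ (1 + ‖p.1‖ + ‖p.2‖) ^ N * exp (-ψ (t, p)) := by
    rw [add_assoc]
    gcongr
    exact max_le_add_of_nonneg (norm_nonneg _) (norm_nonneg _)
  have measurable : Measurable fun p : X × X => (1 + ‖p‖) ^ N * exp (-ψ (t, p)) :=
    ((measurable_norm.const_add 1).pow_const N).mul (hψ t ht).neg.exp
  have integrable : Integrable (fun p : X × X => (1 + ‖p‖) ^ N * exp (-ψ (t, p))) μ :=
    (hc t ht).1.mono' measurable.aestronglyMeasurable (.of_forall fun p => by
      rw [Real.norm_of_nonneg (by positivity)]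
      exact weight_le p)
  exact ⟨integrable, (integral_mono integrable (hc t ht).1 weight_le).trans (hc t ht).2⟩

end Growth

section SolutionCriteria

local notation "𝔼" d:max => EuclideanSpace ℝ (Fin d)

variable {d : ℕ} {A B τ T : ℝ} {ψ : ℝ × 𝔼 d × 𝔼 d → ℝ} {F : ℝ × 𝔼 d × 𝔼 d → 𝔼 d}
  {ρ : ℝ → 𝔼 d → ℝ} {u R : ℝ → 𝔼 d → 𝔼 d}

lemma temperateKineticSolution_of_contDiffOn_Icc
    (hψ : ContDiffOn ℝ 2 ψ (Icc 0 T ×ˢ univ))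
    (hψbound : ∃ c : ℝ, ∃ k : ℕ, ∀ t ∈ Icc (0 : ℝ) T, ∀ x ξ : 𝔼 d,
      ‖iteratedFDerivWithin ℝ 1 ψ (Icc 0 T ×ˢ univ) (t, x, ξ)‖ ≤ c * (1 + ‖x‖ + ‖ξ‖) ^ k)
    (hfmom : ∀ N : ℕ, ∃ c : ℝ, ∀ t ∈ Icc (0 : ℝ) T,
      Integrable (fun p : 𝔼 d × 𝔼 d => (1 + ‖p.1‖ + ‖p.2‖) ^ N * exp (-ψ (t, p))) ∧
      (∫ p : 𝔼 d × 𝔼 d, (1 + ‖p.1‖ + ‖p.2‖) ^ N * exp (-ψ (t, p))) ≤ c)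
    (hF : ContDiffOn ℝ 1 F (Icc 0 T ×ˢ univ))
    (hFbound : ∃ c : ℝ, ∃ k : ℕ, ∀ t ∈ Icc (0 : ℝ) T, ∀ x ξ : 𝔼 d,
      ‖F (t, x, ξ)‖ ≤ c * (1 + ‖x‖ + ‖ξ‖) ^ k ∧
      |ediv (fun ζ => F (t, x, ζ)) ξ| ≤ c * (1 + ‖x‖ + ‖ξ‖) ^ k)
    (hkin : ∀ t ∈ Ioo (0 : ℝ) T, ∀ x ξ : 𝔼 d,
      A * deriv (fun s => exp (-ψ (s, x, ξ))) t
        + B * ⟪ξ, gradient (fun y => exp (-ψ (t, y, ξ))) x⟫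
        + ediv (fun ζ => exp (-ψ (t, x, ζ)) • F (t, x, ζ)) ξ
      = (1 / τ) * ediv
          (fun ζ => gradient (fun ζ' => exp (-ψ (t, x, ζ'))) ζ + exp (-ψ (t, x, ζ)) • ζ) ξ) :
    TemperateKineticSolution A B τ T ψ F := by
  have slab_subset : Ioo 0 T ×ˢ univ ⊆ Icc 0 T ×ˢ (univ : Set (𝔼 d × 𝔼 d)) :=
    prod_mono_left Ioo_subset_Icc_self
  have nhds {t : ℝ} (ht : t ∈ Ioo 0 T) : Ioo 0 T ∈ 𝓝 t := isOpen_Ioo.mem_nhds ht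
  obtain ⟨cψ, kψ, hψ'⟩ := hψbound
  obtain ⟨cF, kF, hF'⟩ := hFbound
  have fderiv_le (t) (ht : t ∈ Ioo 0 T) (x ξ : 𝔼 d) :
      ‖fderiv ℝ ψ (t, x, ξ)‖ ≤ cψ * (1 + ‖x‖ + ‖ξ‖) ^ kψ := by
    have slab_nhds : Icc 0 T ×ˢ univ ∈ 𝓝 (t, x, ξ) :=
      prod_mem_nhds (Icc_mem_nhds ht.1 ht.2) univ_mem
    rw [← fderivWithin_of_mem_nhds slab_nhds,
      ← norm_iteratedFDerivWithin_one ψ (uniqueDiffWithinAt_of_mem_nhds slab_nhds)]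
    exact hψ' t (Ioo_subset_Icc_self ht) x ξ
  exact
  { contDiffOn_potential := hψ.mono slab_subset
    growth_fderiv_potential := .of_norm_le_one_add_add_pow fderiv_le
    uniform_moments := hasUniformMoments_of_one_add_add
      (fun t ht => (contDiff_slice (hψ.mono slab_subset) (nhds ht)).continuous.measurable)
      fun N => (hfmom N).imp fun _ hc t ht => hc t (Ioo_subset_Icc_self ht)
    contDiff_force := fun ht => contDiff_slice (hF.mono slab_subset) (nhds ht)
    growth_force := fun ht => (IsPolyBounded.of_norm_le_one_add_add_pow (h := F)
      fun t ht x ξ => (hF' t ht x ξ).1).slice (Ioo_subset_Icc_self ht)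
    growth_ediv_force := fun ht => (IsPolyBounded.of_norm_le_one_add_add_pow
      (h := fun q : ℝ × 𝔼 d × 𝔼 d => ediv (fun ζ => F (q.1, q.2.1, ζ)) q.2.2)
      fun t ht x ξ => (hF' t ht x ξ).2).slice (Ioo_subset_Icc_self ht)
    equation := fun ht => hkin _ ht }

lemma temperateMacroSolution_of_bound
    (hρC1 : ContDiffOn ℝ 1 (fun q : ℝ × 𝔼 d => ρ q.1 q.2) (Ioo 0 T ×ˢ univ))
    (huC1 : ContDiffOn ℝ 1 (fun q : ℝ × 𝔼 d => u q.1 q.2) (Ioo 0 T ×ˢ univ))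
    (hρpos : ∀ t ∈ Ioo (0 : ℝ) T, ∀ x, 0 < ρ t x)
    (hmacrobound : ∃ c : ℝ, ∃ k : ℕ, ∀ t ∈ Ioo (0 : ℝ) T, ∀ x : 𝔼 d,
      |log (ρ t x)| ≤ c * (1 + ‖x‖) ^ k ∧
      ‖gradient (fun y => log (ρ t y)) x‖ ≤ c * (1 + ‖x‖) ^ k ∧
      ‖u t x‖ ≤ c * (1 + ‖x‖) ^ k ∧
      ‖fderiv ℝ (u t) x‖ ≤ c * (1 + ‖x‖) ^ k ∧
      ‖deriv (fun s => u s x) t‖ ≤ c * (1 + ‖x‖) ^ k)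
    (hmass : ∀ t ∈ Ioo (0 : ℝ) T, ∀ x : 𝔼 d,
      A * deriv (fun s => ρ s x) t + B * ediv (fun y => ρ t y • u t y) x = 0)
    (hmom : ∀ t ∈ Ioo (0 : ℝ) T, ∀ x : 𝔼 d, ∀ i : Fin d,
      A * deriv (fun s => ρ s x * u s x i) t
        + B * ediv (fun y => (ρ t y * u t y i) • u t y) x
        + B * gradient (ρ t) x i
      = ρ t x * R t x i) :
    TemperateMacroSolution A B T ρ u R := by
  obtain ⟨c, k, hc⟩ := hmacrobound
  have growth {V : Type} [NormedAddCommGroup V] {h : ℝ × 𝔼 d → V}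
      (hle : ∀ t ∈ Ioo 0 T, ∀ x, ‖h (t, x)‖ ≤ c * (1 + ‖x‖) ^ k) :
      IsPolyBounded (𝓟 (Ioo 0 T ×ˢ univ)) Prod.snd h :=
    .of_eventually_norm_le (eventually_principal.2 fun q hq => hle q.1 hq.1 q.2)
  exact
  { contDiffOn_density := hρC1
    contDiffOn_velocity := huC1
    density_pos := fun ht => hρpos _ ht
    growth_logDensity := growth fun t ht x => (hc t ht x).1
    growth_gradient_logDensity := growth fun t ht x => (hc t ht x).2.1
    growth_velocity := growth fun t ht x => (hc t ht x).2.2.1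
    growth_fderiv_velocity := growth fun t ht x => (hc t ht x).2.2.2.1
    growth_acceleration := growth fun t ht x => (hc t ht x).2.2.2.2
    mass := fun ht => hmass _ ht
    momentum := fun ht => hmom _ ht }

end SolutionCriteria

section Main

local notation "𝔼" d:max => EuclideanSpace ℝ (Fin d)

variable {d : ℕ} {A B τ T t L : ℝ} {ψ f : ℝ × 𝔼 d × 𝔼 d → ℝ} {F : ℝ × 𝔼 d × 𝔼 d → 𝔼 d}
  {ρ : ℝ → 𝔼 d → ℝ} {u R : ℝ → 𝔼 d → 𝔼 d}

lemma hasDerivAt_relativeEntropy (hA : A ≠ 0) (k : TemperateKineticSolution A B τ T ψ F)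
    (m : TemperateMacroSolution A B T ρ u R) (ht : t ∈ Ioo 0 T) :
    HasDerivAt
      (fun s => ∫ p : 𝔼 d × 𝔼 d,
        exp (-ψ (s, p)) * log (exp (-ψ (s, p)) / maxwellian d (ρ s p.1) (u s p.1) p.2))
      (∫ p : 𝔼 d × 𝔼 d, (-fderiv ℝ ψ (t, p) (1, 0)
          * logMaxwellianRatio (d / 2 * log (2 * π)) (fun p => ψ (t, p)) (fun x => log (ρ t x))
            (u t) p
        + logMaxwellianRatioRate (fun p => -fderiv ℝ ψ (t, p) (1, 0))
          (fun x => fderiv ℝ (fun q : ℝ × 𝔼 d => log (ρ q.1 q.2)) (t, x) (1, 0)) (u t)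
          (fun x => fderiv ℝ (fun q : ℝ × 𝔼 d => u q.1 q.2) (t, x) (1, 0)) p)
        ∂gibbsMeasure volume fun p => ψ (t, p)) t := by
  refine (hasDerivAt_integral_logMaxwellianRatio isOpen_Ioo k.uniform_moments
    (k.contDiffOn_potential.of_le one_le_two) m.contDiffOn_logDensity m.contDiffOn_velocity
    k.growth_potential k.growth_timeDeriv_potential m.growth_logDensity
    (m.growth_timeDeriv_logDensity hA) m.growth_velocity m.growth_timeDeriv_velocity
    (d / 2 * log (2 * π)) ht).congr_of_eventuallyEq ?_
  filter_upwards [isOpen_Ioo.mem_nhds ht] with s hs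
  simp only [log_exp_neg_div_maxwellian _ (m.density_pos hs _), logMaxwellianRatio]

theorem relative_entropy_inequality_general (hA : 0 < A) (hB : 0 ≤ B) (hτ : 0 < τ)
    (hf : f = fun q => exp (-ψ q)) (k : TemperateKineticSolution A B τ T ψ F)
    (m : TemperateMacroSolution A B T ρ u R) (ht : t ∈ Ioo 0 T)
    (hL : ∀ x, ‖fderiv ℝ (u t) x‖ ≤ L) :
    DifferentiableAt ℝ (fun s => ∫ p : 𝔼 d × 𝔼 d,
        f (s, p) * log (f (s, p) / maxwellian d (ρ s p.1) (u s p.1) p.2)) t ∧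
      deriv (fun s => ∫ p : 𝔼 d × 𝔼 d,
          f (s, p) * log (f (s, p) / maxwellian d (ρ s p.1) (u s p.1) p.2)) t
        + 1 / (2 * τ * A) * (∫ p : 𝔼 d × 𝔼 d, (f (t, p))⁻¹ *
            ‖gradient (fun ζ => f (t, p.1, ζ)) p.2
              + f (t, p) • (p.2 - (∫ ξ, f (t, p.1, ξ))⁻¹ • ∫ ξ, f (t, p.1, ξ) • ξ)‖ ^ 2)
      ≤ B / A * L * (∫ x, (∫ ξ, f (t, x, ξ)) *
            ‖(∫ ξ, f (t, x, ξ))⁻¹ • (∫ ξ, f (t, x, ξ) • ξ) - u t x‖ ^ 2)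
        + B ^ 2 * τ / (2 * A) * L ^ 2 * (∫ p : 𝔼 d × 𝔼 d, (1 + ‖p.2‖ ^ 2) * f (t, p))
        - 1 / (A * τ) * (∫ x, (∫ ξ, f (t, x, ξ)) *
            ⟪(∫ ξ, f (t, x, ξ))⁻¹ • ∫ ξ, f (t, x, ξ) • ξ,
              (∫ ξ, f (t, x, ξ))⁻¹ • (∫ ξ, f (t, x, ξ) • ξ) - u t x⟫)
        - 1 / A * (∫ p : 𝔼 d × 𝔼 d, ediv (fun ζ => F (t, p.1, ζ)) p.2 * f (t, p))
        - 1 / A * ∫ p : 𝔼 d × 𝔼 d, f (t, p) * ⟪u t p.1 - p.2, F (t, p) - R t p.1⟫ := by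
  subst hf
  have kt := k.kineticState ht
  have mt := m.flowState ht
  have := kt.isFiniteMeasure
  have hφ : Measurable fun p => ψ (t, p) := kt.contDiff_potential.continuous.measurable
  have mean_memLp := memLp_meanVelocity hφ kt.memLp_velocity
  have relative_memLp := mean_memLp.sub (kt.memLp_flowVelocity mt)
  have drift_eq := integral_gibbsMeasure_comp_fst hφ
    (k := fun x => ‖meanVelocity volume (fun p => ψ (t, p)) x - u t x‖ ^ 2)
    ((memLp_two_iff_integrable_sq_norm relative_memLp.1).1 relative_memLp)
  have friction_eq := integral_gibbsMeasure_comp_fst hφ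
    (k := fun x => ⟪meanVelocity volume (fun p => ψ (t, p)) x,
      meanVelocity volume (fun p => ψ (t, p)) x - u t x⟫)
    (integrable_inner_of_memLp_two mean_memLp relative_memLp)
  have entropy := hasDerivAt_relativeEntropy hA.ne' k m ht
  have bound := integral_entropy_production_le hA hB hτ kt mt hL (d / 2 * log (2 * π))
  refine ⟨entropy.differentiableAt, ?_⟩
  rw [integral_norm_relativeFlux_sq (kt.contDiff_potential.differentiable two_ne_zero), drift_eq,
    friction_eq, integral_gibbsMeasure hφ (fun p => 1 + ‖p.2‖ ^ 2),
    integral_gibbsMeasure hφ (velocityDivergence fun p => F (t, p)),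
    integral_gibbsMeasure hφ (fun p => ⟪u t p.1 - p.2, F (t, p) - R t p.1⟫)] at bound
  rw [entropy.deriv]
  simpa only [meanVelocity_eq hφ, smul_eq_mul, velocityDivergence, ediv_eq_divergence,
    ← Measure.volume_eq_prod, mul_comm (exp (-ψ _)) (1 + _),
    mul_comm (exp (-ψ _)) (divergence _ _)] using bound

end Main

/-- Relative entropy inequality for the kinetic equation
`A ∂_t f + B ξ·∇_x f + ∇_ξ·(F f) = (1/τ) ∇_ξ·(∇_ξ f + ξ f)`
against the macroscopic system `A ∂_t ρ + B ∇·(ρ u) = 0`,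
`A ∂_t(ρ u) + B ∇·(ρ u⊗u) + B ∇ρ = ρ R`, with a uniform bound `|∇u| ≤ L`. -/
theorem relative_entropy_inequality
    (d : ℕ) (hd : 1 ≤ d) (T A B τ : ℝ) (hT : 0 < T) (hA : 0 < A) (hB : 0 < B) (hτ : 0 < τ)
    (ψ f : ℝ × EuclideanSpace ℝ (Fin d) × EuclideanSpace ℝ (Fin d) → ℝ)
    (hf : f = fun p => Real.exp (-ψ p))
    (hψ : ContDiffOn ℝ (⊤ : ℕ∞) ψ (Set.Icc 0 T ×ˢ
      (Set.univ : Set (EuclideanSpace ℝ (Fin d) × EuclideanSpace ℝ (Fin d)))))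
    (hψbound : ∀ n : ℕ, 1 ≤ n → ∃ c : ℝ, ∃ k : ℕ,
      ∀ t ∈ Set.Icc (0 : ℝ) T, ∀ x ξ : EuclideanSpace ℝ (Fin d),
        ‖iteratedFDerivWithin ℝ n ψ
            (Set.Icc 0 T ×ˢ
              (Set.univ : Set (EuclideanSpace ℝ (Fin d) × EuclideanSpace ℝ (Fin d))))
            (t, x, ξ)‖ ≤ c * (1 + ‖x‖ + ‖ξ‖) ^ k)
    (hfmom : ∀ N : ℕ, ∃ c : ℝ, ∀ t ∈ Set.Icc (0 : ℝ) T,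
      Integrable (fun p : EuclideanSpace ℝ (Fin d) × EuclideanSpace ℝ (Fin d) =>
        (1 + ‖p.1‖ + ‖p.2‖) ^ N * f (t, p.1, p.2)) ∧
      (∫ p : EuclideanSpace ℝ (Fin d) × EuclideanSpace ℝ (Fin d),
        (1 + ‖p.1‖ + ‖p.2‖) ^ N * f (t, p.1, p.2)) ≤ c)
    (F : ℝ × EuclideanSpace ℝ (Fin d) × EuclideanSpace ℝ (Fin d) → EuclideanSpace ℝ (Fin d))
    (hF : ContDiffOn ℝ 1 F (Set.Icc 0 T ×ˢ
      (Set.univ : Set (EuclideanSpace ℝ (Fin d) × EuclideanSpace ℝ (Fin d)))))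
    (hFbound : ∃ c : ℝ, ∃ k : ℕ, ∀ t ∈ Set.Icc (0 : ℝ) T, ∀ x ξ : EuclideanSpace ℝ (Fin d),
      ‖F (t, x, ξ)‖ ≤ c * (1 + ‖x‖ + ‖ξ‖) ^ k ∧
      |ediv (fun ζ => F (t, x, ζ)) ξ| ≤ c * (1 + ‖x‖ + ‖ξ‖) ^ k)
    (hkin : ∀ t ∈ Set.Ioo (0 : ℝ) T, ∀ x ξ : EuclideanSpace ℝ (Fin d),
      A * deriv (fun s => f (s, x, ξ)) t
        + B * ⟪ξ, gradient (fun y => f (t, y, ξ)) x⟫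
        + ediv (fun ζ => f (t, x, ζ) • F (t, x, ζ)) ξ
      = (1 / τ) * ediv (fun ζ => gradient (fun ζ' => f (t, x, ζ')) ζ + f (t, x, ζ) • ζ) ξ)
    (ρ : ℝ → EuclideanSpace ℝ (Fin d) → ℝ)
    (u R : ℝ → EuclideanSpace ℝ (Fin d) → EuclideanSpace ℝ (Fin d))
    (hρC1 : ContDiffOn ℝ 1 (fun p : ℝ × EuclideanSpace ℝ (Fin d) => ρ p.1 p.2)
      (Set.Ioo 0 T ×ˢ (Set.univ : Set (EuclideanSpace ℝ (Fin d)))))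
    (huC1 : ContDiffOn ℝ 1 (fun p : ℝ × EuclideanSpace ℝ (Fin d) => u p.1 p.2)
      (Set.Ioo 0 T ×ˢ (Set.univ : Set (EuclideanSpace ℝ (Fin d)))))
    (hRC1 : ContDiffOn ℝ 1 (fun p : ℝ × EuclideanSpace ℝ (Fin d) => R p.1 p.2)
      (Set.Ioo 0 T ×ˢ (Set.univ : Set (EuclideanSpace ℝ (Fin d)))))
    (hρpos : ∀ t ∈ Set.Ioo (0 : ℝ) T, ∀ x, 0 < ρ t x)
    (hmacrobound : ∃ c : ℝ, ∃ k : ℕ, ∀ t ∈ Set.Ioo (0 : ℝ) T, ∀ x : EuclideanSpace ℝ (Fin d),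
      |Real.log (ρ t x)| ≤ c * (1 + ‖x‖) ^ k ∧
      ‖gradient (fun y => Real.log (ρ t y)) x‖ ≤ c * (1 + ‖x‖) ^ k ∧
      ‖u t x‖ ≤ c * (1 + ‖x‖) ^ k ∧
      ‖fderiv ℝ (u t) x‖ ≤ c * (1 + ‖x‖) ^ k ∧
      ‖deriv (fun s => u s x) t‖ ≤ c * (1 + ‖x‖) ^ k ∧
      ‖R t x‖ ≤ c * (1 + ‖x‖) ^ k)
    (hmass : ∀ t ∈ Set.Ioo (0 : ℝ) T, ∀ x : EuclideanSpace ℝ (Fin d),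
      A * deriv (fun s => ρ s x) t + B * ediv (fun y => ρ t y • u t y) x = 0)
    (hmom : ∀ t ∈ Set.Ioo (0 : ℝ) T, ∀ x : EuclideanSpace ℝ (Fin d), ∀ i : Fin d,
      A * deriv (fun s => ρ s x * u s x i) t
        + B * ediv (fun y => (ρ t y * u t y i) • u t y) x
        + B * gradient (ρ t) x i
      = ρ t x * R t x i)
    (L : ℝ)
    (hL : ∀ t ∈ Set.Ioo (0 : ℝ) T, ∀ x : EuclideanSpace ℝ (Fin d), ‖fderiv ℝ (u t) x‖ ≤ L) :
    ∀ t ∈ Set.Ioo (0 : ℝ) T,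
      deriv
          (fun s => ∫ p : EuclideanSpace ℝ (Fin d) × EuclideanSpace ℝ (Fin d),
            f (s, p.1, p.2) *
              Real.log (f (s, p.1, p.2) / maxwellian d (ρ s p.1) (u s p.1) p.2)) t
        + (1 / (2 * τ * A)) * (∫ p : EuclideanSpace ℝ (Fin d) × EuclideanSpace ℝ (Fin d),
            (f (t, p.1, p.2))⁻¹ *
              ‖gradient (fun ζ => f (t, p.1, ζ)) p.2
                + f (t, p.1, p.2) •
                  (p.2 - (∫ ξ, f (t, p.1, ξ))⁻¹ • ∫ ξ, f (t, p.1, ξ) • ξ)‖ ^ 2)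
      ≤ (B / A) * L * (∫ x : EuclideanSpace ℝ (Fin d),
            (∫ ξ, f (t, x, ξ)) *
              ‖((∫ ξ, f (t, x, ξ))⁻¹ • ∫ ξ, f (t, x, ξ) • ξ) - u t x‖ ^ 2)
        + (B ^ 2 * τ / (2 * A)) * L ^ 2 *
            (∫ p : EuclideanSpace ℝ (Fin d) × EuclideanSpace ℝ (Fin d),
              (1 + ‖p.2‖ ^ 2) * f (t, p.1, p.2))
        - (1 / (A * τ)) * (∫ x : EuclideanSpace ℝ (Fin d),
            (∫ ξ, f (t, x, ξ)) *
              ⟪(∫ ξ, f (t, x, ξ))⁻¹ • ∫ ξ, f (t, x, ξ) • ξ,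
                ((∫ ξ, f (t, x, ξ))⁻¹ • ∫ ξ, f (t, x, ξ) • ξ) - u t x⟫)
        - (1 / A) * (∫ p : EuclideanSpace ℝ (Fin d) × EuclideanSpace ℝ (Fin d),
            ediv (fun ζ => F (t, p.1, ζ)) p.2 * f (t, p.1, p.2))
        - (1 / A) * (∫ p : EuclideanSpace ℝ (Fin d) × EuclideanSpace ℝ (Fin d),
            f (t, p.1, p.2) * ⟪u t p.1 - p.2, F (t, p.1, p.2) - R t p.1⟫) := by
  subst hf
  intro t ht
  have kinetic : TemperateKineticSolution A B τ T ψ F :=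
    temperateKineticSolution_of_contDiffOn_Icc (contDiffOn_infty.1 hψ 2) (hψbound 1 le_rfl)
      hfmom hF hFbound hkin
  have macroscopic : TemperateMacroSolution A B T ρ u R :=
    temperateMacroSolution_of_bound hρC1 huC1 hρpos
      (hmacrobound.imp fun _ => Exists.imp fun _ hc t ht x =>
        let ⟨logDensity, gradient, velocity, strain, acceleration, _⟩ := hc t ht x
        ⟨logDensity, gradient, velocity, strain, acceleration⟩) hmass hmom
  exact (relative_entropy_inequality_general hA hB.le hτ rfl kinetic macroscopic ht (hL t ht)).2
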